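/- Let X and Y be quasi-Banach spaces such that the dual space X* has cotype 2 and Y has cotype 2. Then there is a constant C (depending only on X and Y) such that every strongly approximable bounded linear operator u : X → Y satisfies γ₂(u) ≤ C‖u‖; in particular every such operator factors through a Hilbert space. -/

import Mathlib

open scoped ENNReal NNReal BigOperators

universe uX uY uZ uW uE uO uG uV

/-- The sign `±1` attached to a Boolean. -/
noncomputable def rsign (b : Bool) : ℝ := if b then 1 else -1

section Defs

variable {X : Type uX} {Y : Type uY} {Z : Type uZ} {W : Type uW}
  [AddCommGroup X] [Module ℝ X] [AddCommGroup Y] [Module ℝ Y]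
  [AddCommGroup Z] [Module ℝ Z] [AddCommGroup W] [Module ℝ W]

/-- A quasi-norm on a real vector space. -/
structure QuasiNormOn (X : Type uX) [AddCommGroup X] [Module ℝ X] : Type uX where
  q : X → ℝ
  nonneg : ∀ x, 0 ≤ q x
  eq_zero_iff : ∀ x, q x = 0 ↔ x = 0
  smul_eq : ∀ (a : ℝ) (x : X), q (a • x) = |a| * q x
  k : ℝ
  one_le_k : 1 ≤ k
  tri : ∀ x y, q (x + y) ≤ k * (q x + q y)

/-- Completeness of a quasi-normed space, via Cauchy sequences for the quasi-norm
(the induced topology is metrizable, so sequences suffice). -/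
def CauchyComplete (q : X → ℝ) : Prop :=
  ∀ f : ℕ → X, (∀ ε > (0:ℝ), ∃ N, ∀ m ≥ N, ∀ n ≥ N, q (f m - f n) < ε) →
    ∃ x, ∀ ε > (0:ℝ), ∃ N, ∀ n ≥ N, q (f n - x) < ε

/-- `u` is bounded by `M` as an operator `(X,qX) → (Y,qY)`. -/
def OpBoundedBy (qX : X → ℝ) (qY : Y → ℝ) (u : X →ₗ[ℝ] Y) (M : ℝ) : Prop :=
  ∀ x, qY (u x) ≤ M * qX x

/-- `u` is a bounded operator `(X,qX) → (Y,qY)`. -/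
def IsBddOp (qX : X → ℝ) (qY : Y → ℝ) (u : X →ₗ[ℝ] Y) : Prop :=
  ∃ M, 0 ≤ M ∧ OpBoundedBy qX qY u M

/-- The operator (quasi-)norm of `u : (X,qX) → (Y,qY)`. -/
noncomputable def opQNorm (qX : X → ℝ) (qY : Y → ℝ) (u : X →ₗ[ℝ] Y) : ℝ :=
  sInf {M | 0 ≤ M ∧ OpBoundedBy qX qY u M}

/-- The `L_p`-average of `q (∑ᵢ εᵢ xᵢ)` over all choices of signs `εᵢ = ±1`
(the normalized counting measure on `D_n = {-1,1}ⁿ`). -/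
noncomputable def radAvg (q : X → ℝ) (p : ℝ) {n : ℕ} (x : Fin n → X) : ℝ :=
  (((2:ℝ) ^ n)⁻¹ * ∑ ε : Fin n → Bool, q (∑ i, rsign (ε i) • x i) ^ p) ^ (1 / p)

/-- `(X,q)` has cotype `p` with constant at most `C`. -/
def CotypeConstLe (q : X → ℝ) (p C : ℝ) : Prop :=
  ∀ (n : ℕ) (x : Fin n → X), (∑ i, q (x i) ^ p) ^ (1 / p) ≤ C * radAvg q p x

/-- `(X,q)` has cotype `p`. -/
def HasCotype (q : X → ℝ) (p : ℝ) : Prop := ∃ C, 0 < C ∧ CotypeConstLe q p C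

/-- `(X,q)` has type 2 constant at most `C`. -/
def Type2ConstLe (q : X → ℝ) (C : ℝ) : Prop :=
  ∀ (n : ℕ) (x : Fin n → X),
    radAvg q (2:ℝ) x ≤ C * (∑ i, q (x i) ^ (2:ℝ)) ^ (1/2 : ℝ)

/-- A linear functional bounded with respect to the quasi-norm `q`. -/
def DualBdd (q : X → ℝ) (f : X →ₗ[ℝ] ℝ) : Prop := ∃ M, 0 ≤ M ∧ ∀ x, |f x| ≤ M * q x

/-- The dual norm of a linear functional on `(X,q)`. -/
noncomputable def dualNorm (q : X → ℝ) (f : X →ₗ[ℝ] ℝ) : ℝ :=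
  sInf {M | 0 ≤ M ∧ ∀ x, |f x| ≤ M * q x}

/-- The dual space `X*` of `(X,q)` has cotype 2 (as a Banach space with the dual norm). -/
def DualHasCotype2 (q : X → ℝ) : Prop :=
  ∃ C, 0 < C ∧ ∀ (n : ℕ) (f : Fin n → (X →ₗ[ℝ] ℝ)), (∀ i, DualBdd q (f i)) →
    (∑ i, dualNorm q (f i) ^ (2:ℝ)) ^ (1/2:ℝ) ≤
      C * ((((2:ℝ) ^ n)⁻¹ *
        ∑ ε : Fin n → Bool, dualNorm q (∑ i, rsign (ε i) • f i) ^ (2:ℝ)) ^ (1/2:ℝ))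

/-- `γ₂(u) ≤ c` : `u` factors through a Hilbert space (every real Hilbert space being
isometric to some `ℓ²(ι)`) with product of the two operator norms at most `c`. -/
def Gamma2Le (qX : X → ℝ) (qY : Y → ℝ) (u : X →ₗ[ℝ] Y) (c : ℝ) : Prop :=
  ∃ (ι : Type uX) (w : X →ₗ[ℝ] lp (fun _ : ι => ℝ) 2)
    (v : lp (fun _ : ι => ℝ) 2 →ₗ[ℝ] Y) (Cw Cv : ℝ),
    0 ≤ Cw ∧ 0 ≤ Cv ∧ (∀ x, ‖w x‖ ≤ Cw * qX x) ∧ (∀ h, qY (v h) ≤ Cv * ‖h‖) ∧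
    (∀ x, v (w x) = u x) ∧ Cv * Cw ≤ c

/-- `S` is closed under pointwise limits of bounded nets (equivalently, filters). -/
def NetClosed (qX : X → ℝ) (qY : Y → ℝ) (S : Set (X →ₗ[ℝ] Y)) : Prop :=
  ∀ l : Filter (X →ₗ[ℝ] Y), l.NeBot →
    (∀ᶠ w in l, w ∈ S) →
    (∃ B, ∀ᶠ w in l, OpBoundedBy qX qY w B) →
    ∀ u : X →ₗ[ℝ] Y,
      (∀ x, Filter.Tendsto (fun w : X →ₗ[ℝ] Y => qY (w x - u x)) l (nhds 0)) → u ∈ S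

/-- `u` belongs to the smallest subspace of `L(X,Y)` which contains the finite-rank
operators and is closed under pointwise convergence of bounded nets. -/
def StronglyApproximable (qX : X → ℝ) (qY : Y → ℝ) (u : X →ₗ[ℝ] Y) : Prop :=
  ∀ S : Set (X →ₗ[ℝ] Y),
    (∀ w ∈ S, IsBddOp qX qY w) →
    (∀ w w', w ∈ S → w' ∈ S → w + w' ∈ S) →
    (∀ (a : ℝ) (w : X →ₗ[ℝ] Y), w ∈ S → a • w ∈ S) →
    (∀ w : X →ₗ[ℝ] Y, IsBddOp qX qY w → Module.Finite ℝ (LinearMap.range w) → w ∈ S) →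
    NetClosed qX qY S → u ∈ S

end Defs

namespace AGT

section HahnBanach

/-- A sublinear functional is attained by a linear functional it dominates. -/
lemma exists_dominated {E : Type*} [AddCommGroup E] [Module ℝ E] (N : E → ℝ)
    (hom : ∀ c : ℝ, 0 < c → ∀ x, N (c • x) = c * N x)
    (hadd : ∀ x y, N (x + y) ≤ N x + N y) (x₀ : E) :
    ∃ g : E →ₗ[ℝ] ℝ, g x₀ = N x₀ ∧ ∀ x, g x ≤ N x := by
  have h0 : N 0 = 0 := by
    have := hom 2 (by norm_num) 0
    rw [smul_zero] at this
    linarith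
  by_cases hx : x₀ = 0
  · obtain ⟨g, -, hg⟩ := exists_extension_of_le_sublinear (⊥ : E →ₗ.[ℝ] ℝ) N hom hadd (by
      rintro ⟨x, hx⟩
      have hx' : x = 0 := (Submodule.mem_bot ℝ).1 hx
      subst hx'
      rw [show (⟨0, hx⟩ : (⊥ : E →ₗ.[ℝ] ℝ).domain) = 0 from rfl, LinearPMap.map_zero]
      exact h0.ge)
    exact ⟨g, by rw [hx, map_zero, h0], hg⟩
  · obtain ⟨g, hg1, hg⟩ := exists_extension_of_le_sublinear
      (LinearPMap.mkSpanSingleton (σ := RingHom.id ℝ) x₀ (N x₀) hx) N hom hadd (by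
      rintro ⟨x, hx'⟩
      obtain ⟨a, rfl⟩ := Submodule.mem_span_singleton.1 hx'
      rw [LinearPMap.mkSpanSingleton'_apply]
      simp only [RingHom.id_apply, smul_eq_mul]
      rcases lt_trichotomy a 0 with ha | ha | ha
      · have h1 := hom (-a) (by linarith) x₀
        have h2 := hadd (a • x₀) ((-a) • x₀)
        rw [neg_smul, add_neg_cancel, h0, ← neg_smul, h1] at h2
        linarith
      · simp [ha, h0]
      · rw [hom a ha])
    refine ⟨g, ?_, hg⟩
    have := hg1 ⟨x₀, Submodule.mem_span_singleton_self x₀⟩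
    rw [this]
    exact LinearPMap.mkSpanSingleton_apply ℝ ℝ (σ := RingHom.id ℝ) hx (N x₀)

end HahnBanach

section Main

variable {X : Type uX} {Y : Type uY} [AddCommGroup X] [Module ℝ X] [AddCommGroup Y] [Module ℝ Y]

lemma q_zero (Q : QuasiNormOn X) : Q.q 0 = 0 := (Q.eq_zero_iff 0).2 rfl

lemma q_neg (Q : QuasiNormOn X) (x : X) : Q.q (-x) = Q.q x := by
  have := Q.smul_eq (-1) x
  simpa using this

lemma q_sum_le (Q : QuasiNormOn X) {ι : Type*} (s : Finset ι) (z : ι → X) :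
    Q.q (∑ i ∈ s, z i) ≤ Q.k ^ s.card * ∑ i ∈ s, Q.q (z i) := by
  classical
  have hk := Q.one_le_k
  induction s using Finset.induction_on with
  | empty => simp [q_zero]
  | insert a s ha ih =>
    rw [Finset.sum_insert ha, Finset.sum_insert ha, Finset.card_insert_of_notMem ha]
    have h1 := Q.tri (z a) (∑ i ∈ s, z i)
    have h2 : (1:ℝ) ≤ Q.k ^ s.card := one_le_pow₀ hk
    have h3 : Q.q (z a) ≤ Q.k ^ s.card * Q.q (z a) :=
      le_mul_of_one_le_left (Q.nonneg _) h2
    calc _ ≤ _ := h1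
      _ ≤ Q.k * (Q.k ^ s.card * Q.q (z a) + Q.k ^ s.card * ∑ i ∈ s, Q.q (z i)) := by gcongr
      _ = _ := by ring

/-- `u` is dominated by a Hilbertian seminorm of size at most `c`. -/
def HilbBd (QX : QuasiNormOn X) (QY : QuasiNormOn Y) (u : X →ₗ[ℝ] Y) (c : ℝ) : Prop :=
  ∃ B : X →ₗ[ℝ] X →ₗ[ℝ] ℝ, (∀ x y, B x y = B y x) ∧ (∀ x, QY.q (u x) ^ 2 ≤ B x x) ∧
    ∀ x, B x x ≤ c ^ 2 * QX.q x ^ 2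

/-- The finitary criterion for `HilbBd`. -/
def Crit (QX : QuasiNormOn X) (QY : QuasiNormOn Y) (u : X →ₗ[ℝ] Y) (c : ℝ) : Prop :=
  ∀ (n : ℕ) (x y : Fin n → X),
    (∀ B : X →ₗ[ℝ] X →ₗ[ℝ] ℝ, ∑ i, B (x i) (x i) = ∑ i, B (y i) (y i)) →
    ∑ i, QY.q (u (y i)) ^ 2 ≤ c ^ 2 * ∑ i, QX.q (x i) ^ 2

lemma HilbBd.crit {QX : QuasiNormOn X} {QY : QuasiNormOn Y} {u : X →ₗ[ℝ] Y} {c : ℝ}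
    (h : HilbBd QX QY u c) : Crit QX QY u c := by
  obtain ⟨B, -, h1, h2⟩ := h
  intro n x y hxy
  calc _ ≤ ∑ i, B (y i) (y i) := Finset.sum_le_sum fun i _ => h1 _
    _ = ∑ i, B (x i) (x i) := (hxy B).symm
    _ ≤ ∑ i, c ^ 2 * QX.q (x i) ^ 2 := Finset.sum_le_sum fun i _ => h2 _
    _ = _ := by rw [Finset.mul_sum]

lemma Crit.fintype {QX : QuasiNormOn X} {QY : QuasiNormOn Y} {u : X →ₗ[ℝ] Y} {c : ℝ}
    (h : Crit QX QY u c) {ι : Type} [Fintype ι] (x y : ι → X)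
    (hxy : ∀ B : X →ₗ[ℝ] X →ₗ[ℝ] ℝ, ∑ i, B (x i) (x i) = ∑ i, B (y i) (y i)) :
    ∑ i, QY.q (u (y i)) ^ 2 ≤ c ^ 2 * ∑ i, QX.q (x i) ^ 2 := by
  let e := Fintype.equivFin ι
  have := h _ (x ∘ e.symm) (y ∘ e.symm) (fun B => by
    have h1 := Equiv.sum_comp e.symm (fun i => B (x i) (x i))
    have h2 := Equiv.sum_comp e.symm (fun i => B (y i) (y i))
    simp only [Function.comp]
    rw [h1, h2, hxy])
  have h1 := Equiv.sum_comp e.symm (fun i => QY.q (u (y i)) ^ 2)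
  have h2 := Equiv.sum_comp e.symm (fun i => QX.q (x i) ^ 2)
  simp only [Function.comp] at this
  rwa [h1, h2] at this

/-- The evaluation `B ↦ B x x`. -/
def dg (x : X) : (X →ₗ[ℝ] X →ₗ[ℝ] ℝ) → ℝ := fun B => B x x

/-- The span of all diagonal evaluations. -/
def WW (X : Type uX) [AddCommGroup X] [Module ℝ X] :
    Submodule ℝ ((X →ₗ[ℝ] X →ₗ[ℝ] ℝ) → ℝ) := Submodule.span ℝ (Set.range dg)

/-- Values of the representations of an element of `WW`. -/
def reps (QX : QuasiNormOn X) (QY : QuasiNormOn Y) (u : X →ₗ[ℝ] Y) (c : ℝ)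
    (w : (X →ₗ[ℝ] X →ₗ[ℝ] ℝ) → ℝ) : Set ℝ :=
  {r | ∃ (ι : Type) (_ : Fintype ι) (x y : ι → X),
    (∀ B, w B = ∑ i, B (x i) (x i) - ∑ i, B (y i) (y i)) ∧
    r = c ^ 2 * ∑ i, QX.q (x i) ^ 2 - ∑ i, QY.q (u (y i)) ^ 2}

lemma reps_add {QX : QuasiNormOn X} {QY : QuasiNormOn Y} {u : X →ₗ[ℝ] Y} {c : ℝ}
    {w w' : (X →ₗ[ℝ] X →ₗ[ℝ] ℝ) → ℝ} {r r' : ℝ} (h : r ∈ reps QX QY u c w)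
    (h' : r' ∈ reps QX QY u c w') : r + r' ∈ reps QX QY u c (w + w') := by
  obtain ⟨ι, _, x, y, h1, h2⟩ := h
  obtain ⟨ι', _, x', y', h1', h2'⟩ := h'
  refine ⟨ι ⊕ ι', inferInstance, Sum.elim x x', Sum.elim y y', fun B => ?_, ?_⟩
  · simp only [Pi.add_apply, h1, h1', Fintype.sum_sum_type, Sum.elim_inl, Sum.elim_inr]
    ring
  · simp only [h2, h2', Fintype.sum_sum_type, Sum.elim_inl, Sum.elim_inr]
    ring

lemma reps_smul {QX : QuasiNormOn X} {QY : QuasiNormOn Y} {u : X →ₗ[ℝ] Y} {c : ℝ}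
    {w : (X →ₗ[ℝ] X →ₗ[ℝ] ℝ) → ℝ} {r a : ℝ} (ha : 0 ≤ a) (h : r ∈ reps QX QY u c w) :
    a * r ∈ reps QX QY u c (a • w) := by
  obtain ⟨ι, _, x, y, h1, h2⟩ := h
  have hs : √a * √a = a := Real.mul_self_sqrt ha
  refine ⟨ι, inferInstance, fun i => √a • x i, fun i => √a • y i, fun B => ?_, ?_⟩
  · simp only [Pi.smul_apply, h1, map_smul, LinearMap.smul_apply, smul_eq_mul, ← mul_assoc, hs,
      ← Finset.mul_sum]
    ring
  · simp only [h2, map_smul, QX.smul_eq, QY.smul_eq, mul_pow, sq_abs, ← Finset.mul_sum,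
      Real.sq_sqrt ha]
    ring

lemma reps_dg (QX : QuasiNormOn X) (QY : QuasiNormOn Y) (u : X →ₗ[ℝ] Y) (c : ℝ) (x : X) :
    c ^ 2 * QX.q x ^ 2 ∈ reps QX QY u c (dg x) :=
  ⟨Unit, inferInstance, fun _ => x, fun _ => 0, fun B => by simp [dg], by simp [q_zero]⟩

lemma reps_neg_dg (QX : QuasiNormOn X) (QY : QuasiNormOn Y) (u : X →ₗ[ℝ] Y) (c : ℝ) (x : X) :
    - QY.q (u x) ^ 2 ∈ reps QX QY u c (-dg x) :=
  ⟨Unit, inferInstance, fun _ => 0, fun _ => x, fun B => by simp [dg], by simp [q_zero]⟩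

lemma reps_nonempty (QX : QuasiNormOn X) (QY : QuasiNormOn Y) (u : X →ₗ[ℝ] Y) (c : ℝ)
    {w : (X →ₗ[ℝ] X →ₗ[ℝ] ℝ) → ℝ} (hw : w ∈ WW X) :
    (reps QX QY u c w).Nonempty ∧ (reps QX QY u c (-w)).Nonempty := by
  induction hw using Submodule.span_induction with
  | mem w h =>
    obtain ⟨x, rfl⟩ := h
    exact ⟨⟨_, reps_dg QX QY u c x⟩, ⟨_, reps_neg_dg QX QY u c x⟩⟩
  | zero =>
    have : (0:ℝ) ∈ reps QX QY u c 0 :=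
      ⟨Empty, inferInstance, Empty.elim, Empty.elim, fun B => by simp, by simp⟩
    exact ⟨⟨_, this⟩, ⟨0, by simpa using this⟩⟩
  | add w w' _ _ h h' =>
    refine ⟨⟨_, reps_add h.1.some_mem h'.1.some_mem⟩, ⟨h.2.some + h'.2.some, ?_⟩⟩
    rw [neg_add]
    exact reps_add h.2.some_mem h'.2.some_mem
  | smul a w _ h =>
    rcases le_total 0 a with ha | ha
    · refine ⟨⟨_, reps_smul ha h.1.some_mem⟩, ⟨a * h.2.some, ?_⟩⟩
      rw [← smul_neg]
      exact reps_smul ha h.2.some_mem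
    · refine ⟨⟨(-a) * h.2.some, ?_⟩, ⟨(-a) * h.1.some, ?_⟩⟩
      · have := reps_smul (neg_nonneg.2 ha) h.2.some_mem
        rwa [neg_smul_neg] at this
      · have := reps_smul (neg_nonneg.2 ha) h.1.some_mem
        rwa [neg_smul] at this

lemma Crit.hilbBd {QX : QuasiNormOn X} {QY : QuasiNormOn Y} {u : X →ₗ[ℝ] Y} {c : ℝ}
    (h : Crit QX QY u c) : HilbBd QX QY u c := by
  have key : ∀ r ∈ reps QX QY u c 0, 0 ≤ r := by
    rintro r ⟨ι, _, x, y, h1, rfl⟩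
    have := h.fintype x y (fun B => by have := h1 B; simp at this; linarith)
    linarith
  let N : WW X → ℝ := fun w => sInf (reps QX QY u c w)
  have hne : ∀ w : WW X, (reps QX QY u c w).Nonempty := fun w =>
    (reps_nonempty QX QY u c w.2).1
  have hbdd : ∀ w : WW X, BddBelow (reps QX QY u c w) := by
    intro w
    obtain ⟨r, hr⟩ := (reps_nonempty QX QY u c w.2).2
    refine ⟨-r, fun s hs => ?_⟩
    have := key _ (by simpa using reps_add hs hr)
    linarith
  have hle : ∀ (a : ℝ), 0 < a → ∀ w : WW X, N (a • w) ≤ a * N w := by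
    intro a ha w
    rw [← div_le_iff₀' ha]
    refine le_csInf (hne w) fun r hr => ?_
    rw [div_le_iff₀' ha]
    exact csInf_le (hbdd _) (reps_smul ha.le hr)
  obtain ⟨g, -, hg⟩ := exists_dominated N (by
    intro a ha w
    refine le_antisymm (hle a ha w) ?_
    have := hle a⁻¹ (inv_pos.2 ha) (a • w)
    rw [smul_smul, inv_mul_cancel₀ ha.ne', one_smul] at this
    rwa [← div_eq_inv_mul, le_div_iff₀' ha] at this) (by
    intro w w'
    have : N (w + w') - N w' ≤ N w := by
      refine le_csInf (hne w) fun r hr => ?_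
      have : N (w + w') - r ≤ N w' := by
        refine le_csInf (hne w') fun r' hr' => ?_
        have : N (w + w') ≤ r + r' := csInf_le (hbdd _) (reps_add hr hr')
        linarith
      linarith
    linarith) 0
  have hdg : ∀ x : X, dg x ∈ WW X := fun x => Submodule.subset_span ⟨x, rfl⟩
  have hsym : ∀ x y : X, (fun B : X →ₗ[ℝ] X →ₗ[ℝ] ℝ => (B x y + B y x) / 2) ∈ WW X := by
    intro x y
    have : (fun B : X →ₗ[ℝ] X →ₗ[ℝ] ℝ => (B x y + B y x) / 2)
        = (1/2:ℝ) • (dg (x + y) - dg x - dg y) := by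
      funext B
      simp [dg]
      ring
    rw [this]
    exact Submodule.smul_mem _ _ (Submodule.sub_mem _ (Submodule.sub_mem _ (hdg _) (hdg _)) (hdg _))
  let B0 : X →ₗ[ℝ] X →ₗ[ℝ] ℝ := LinearMap.mk₂ ℝ (fun x y => g ⟨_, hsym x y⟩)
    (by
      intro x x' y
      rw [← map_add]
      congr 1
      ext B
      simp
      ring)
    (by
      intro a x y
      rw [← map_smul]
      congr 1
      ext B
      simp
      ring)
    (by
      intro x y y'
      rw [← map_add]
      congr 1
      ext B
      simp
      ring)
    (by
      intro a x y
      rw [← map_smul]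
      congr 1
      ext B
      simp
      ring)
  have hB0 : ∀ x, B0 x x = g ⟨dg x, hdg x⟩ := by
    intro x
    simp only [B0, LinearMap.mk₂_apply]
    congr 1
    ext B
    simp [dg]
  refine ⟨B0, ?_, ?_, ?_⟩
  · intro x y
    simp only [B0, LinearMap.mk₂_apply]
    congr 1
    ext B
    simp
    ring
  · intro x
    rw [hB0]
    have h1 := hg (-⟨dg x, hdg x⟩)
    have h2 : N (-⟨dg x, hdg x⟩) ≤ - QY.q (u x) ^ 2 :=
      csInf_le (hbdd _) (reps_neg_dg QX QY u c x)
    rw [map_neg] at h1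
    linarith
  · intro x
    rw [hB0]
    exact (hg _).trans (csInf_le (hbdd _) (reps_dg QX QY u c x))

end Main
end AGT

namespace AGT

section Kwapien

variable {X : Type uX} {Y : Type uY} [AddCommGroup X] [Module ℝ X] [AddCommGroup Y] [Module ℝ Y]

lemma rsign_sq (b : Bool) : rsign b ^ 2 = 1 := by cases b <;> simp [rsign]

lemma rsign_mul_self (b : Bool) : rsign b * rsign b = 1 := by cases b <;> simp [rsign]

lemma abs_rsign (b : Bool) : |rsign b| = 1 := by cases b <;> simp [rsign]

/-- A continuous replacement of the quasi-norm on finite dimensional pieces. -/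
lemma exists_smooth (Q : QuasiNormOn Y) {n : ℕ} (v : Fin n → Y) :
    ∃ F : EuclideanSpace ℝ (Fin n) → ℝ, Continuous F ∧
      (∀ a, Q.q (∑ i, a i • v i) ≤ F a) ∧ (∀ a, F a ≤ Q.k * Q.q (∑ i, a i • v i)) := by
  let p : EuclideanSpace ℝ (Fin n) → ℝ := fun a => Q.q (∑ i, a i • v i)
  have hk := Q.one_le_k
  have hp0 : ∀ a, 0 ≤ p a := fun a => Q.nonneg _
  let M : ℝ := Q.k ^ n * ∑ i, Q.q (v i)
  have hM : 0 ≤ M := mul_nonneg (by positivity) (Finset.sum_nonneg fun i _ => Q.nonneg _)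
  have hpM : ∀ a, p a ≤ M * ‖a‖ := by
    intro a
    have h1 := q_sum_le Q Finset.univ (fun i => a i • v i)
    rw [Finset.card_univ, Fintype.card_fin] at h1
    refine h1.trans ?_
    rw [mul_assoc, Finset.sum_mul]
    gcongr with i
    rw [Q.smul_eq, mul_comm]
    have := PiLp.norm_apply_le a i
    rw [Real.norm_eq_abs] at this
    exact mul_le_mul_of_nonneg_left this (Q.nonneg _)
  have htri : ∀ a r, p a ≤ Q.k * (p r + M * ‖a - r‖) := by
    intro a r
    have h1 := Q.tri (∑ i, r i • v i) (∑ i, (a - r) i • v i)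
    rw [← Finset.sum_add_distrib] at h1
    have h2 : ∀ i, r i • v i + (a - r) i • v i = a i • v i := by
      intro i
      rw [← add_smul]
      simp
    simp only [h2] at h1
    refine h1.trans ?_
    have := hpM (a - r)
    gcongr
  let F : EuclideanSpace ℝ (Fin n) → ℝ := fun a => ⨅ r, Q.k * (p r + M * ‖a - r‖)
  have hb : ∀ a, BddBelow (Set.range fun r => Q.k * (p r + M * ‖a - r‖)) := by
    intro a
    refine ⟨0, ?_⟩
    rintro _ ⟨r, rfl⟩
    have := hp0 r
    positivity
  refine ⟨F, ?_, ?_, ?_⟩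
  · have hL : ∀ a b, F a ≤ F b + Q.k * M * ‖a - b‖ := by
      intro a b
      rw [← sub_le_iff_le_add]
      refine le_ciInf fun r => ?_
      rw [sub_le_iff_le_add]
      refine (ciInf_le (hb a) r).trans ?_
      have h1 : ‖a - r‖ ≤ ‖b - r‖ + ‖a - b‖ := by
        have := norm_add_le (b - r) (a - b)
        rwa [show b - r + (a - b) = a - r by abel] at this
      calc Q.k * (p r + M * ‖a - r‖) ≤ Q.k * (p r + M * (‖b - r‖ + ‖a - b‖)) := by gcongr
        _ = _ := by ring
    refine (LipschitzWith.of_dist_le_mul (K := ⟨Q.k * M, by positivity⟩) fun a b => ?_).continuous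
    rw [Real.dist_eq, dist_eq_norm, abs_le]
    have h1 := hL a b
    have h2 := hL b a
    rw [norm_sub_rev] at h2
    constructor
    · change -(Q.k * M * ‖a - b‖) ≤ _; linarith
    · change _ ≤ Q.k * M * ‖a - b‖; linarith
  · intro a
    exact le_ciInf fun r => htri a r
  · intro a
    refine (ciInf_le (hb a) a).trans ?_
    simp [p]

/-- Squared cotype 2 inequality. -/
def CotypeSq (Q : QuasiNormOn Y) (C : ℝ) : Prop :=
  ∀ (n : ℕ) (y : Fin n → Y), ∑ i, Q.q (y i) ^ 2 ≤
    C * ((2 ^ n)⁻¹ * ∑ ε : Fin n → Bool, Q.q (∑ i, rsign (ε i) • y i) ^ 2)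

/-- `u` has type 2 with (squared) constant `T`. -/
def TypeBd (QX : QuasiNormOn X) (QY : QuasiNormOn Y) (u : X →ₗ[ℝ] Y) (T : ℝ) : Prop :=
  ∀ (n : ℕ) (x : Fin n → X),
    (2 ^ n)⁻¹ * ∑ ε : Fin n → Bool, QY.q (∑ i, rsign (ε i) • u (x i)) ^ 2 ≤
      T * ∑ i, QX.q (x i) ^ 2

lemma exists_rotation {n : ℕ} (x y : Fin n → X)
    (hxy : ∀ B : X →ₗ[ℝ] X →ₗ[ℝ] ℝ, ∑ i, B (x i) (x i) = ∑ i, B (y i) (y i)) :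
    ∃ O : EuclideanSpace ℝ (Fin n) ≃ₗᵢ[ℝ] EuclideanSpace ℝ (Fin n),
      ∀ a : EuclideanSpace ℝ (Fin n), ∑ j, a j • y j = ∑ i, (O a) i • x i := by
  let ev : (Fin n → X) → (Module.Dual ℝ X →ₗ[ℝ] EuclideanSpace ℝ (Fin n)) := fun x =>
    { toFun := fun ξ => WithLp.toLp 2 fun i => ξ (x i)
      map_add' := fun ξ η => by ext i; simp
      map_smul' := fun a ξ => by ext i; simp }
  have hev : ∀ x ξ i, ev x ξ i = ξ (x i) := fun x ξ i => rfl
  have hnorm : ∀ ξ, ‖ev x ξ‖ = ‖ev y ξ‖ := by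
    intro ξ
    rw [EuclideanSpace.norm_eq, EuclideanSpace.norm_eq]
    congr 1
    simp only [hev, Real.norm_eq_abs, sq_abs]
    have := hxy (LinearMap.mk₂ ℝ (fun a b => ξ a * ξ b)
      (by intros; simp; ring) (by intros; simp; ring)
      (by intros; simp; ring) (by intros; simp; ring))
    simpa [LinearMap.mk₂_apply, sq] using this
  have : Module.Free ℝ (LinearMap.range (ev x)) := Module.Free.of_divisionRing ℝ _
  have : Module.Projective ℝ (LinearMap.range (ev x)) := Module.Projective.of_free
  obtain ⟨σ, hσ⟩ := LinearMap.exists_rightInverse_of_surjective (ev x).rangeRestrict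
    (LinearMap.range_rangeRestrict _)
  have hσ' : ∀ s : LinearMap.range (ev x), ev x (σ s) = s := fun s => by
    have := LinearMap.congr_fun hσ s
    simpa using congrArg Subtype.val this
  let L : LinearMap.range (ev x) →ₗᵢ[ℝ] EuclideanSpace ℝ (Fin n) :=
    { toLinearMap := (ev y).comp σ
      norm_map' := fun s => by
        simp only [LinearMap.comp_apply]
        rw [← hnorm, hσ']
        rfl }
  have hL : ∀ ξ, L ⟨ev x ξ, LinearMap.mem_range_self _ ξ⟩ = ev y ξ := by
    intro ξ
    have h1 : ev x (σ ⟨ev x ξ, LinearMap.mem_range_self _ ξ⟩ - ξ) = 0 := by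
      rw [map_sub, hσ', sub_self]
    have h2 := hnorm (σ ⟨ev x ξ, LinearMap.mem_range_self _ ξ⟩ - ξ)
    rw [h1, norm_zero] at h2
    have h3 := norm_eq_zero.1 h2.symm
    rw [map_sub, sub_eq_zero] at h3
    exact h3
  let O := (L.extend.toLinearIsometryEquiv rfl)
  have hO : ∀ ξ, O (ev x ξ) = ev y ξ := by
    intro ξ
    rw [← hL ξ]
    exact L.extend_apply ⟨ev x ξ, LinearMap.mem_range_self _ ξ⟩
  refine ⟨O.symm, fun a => ?_⟩
  rw [← sub_eq_zero, ← Module.forall_dual_apply_eq_zero_iff ℝ]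
  intro ξ
  rw [map_sub, sub_eq_zero]
  simp only [map_sum, map_smul, smul_eq_mul]
  have h1 : inner ℝ (ev y ξ) a = inner ℝ (ev x ξ) (O.symm a) := by
    rw [← hO, ← O.inner_map_map (ev x ξ) (O.symm a), O.apply_symm_apply]
  simpa [PiLp.inner_apply, hev] using h1

/-- Sign change as an isometry. -/
noncomputable def signIso {n : ℕ} (δ : Fin n → Bool) :
    EuclideanSpace ℝ (Fin n) ≃ₗᵢ[ℝ] EuclideanSpace ℝ (Fin n) :=
  LinearIsometryEquiv.piLpCongrRight 2
    (fun i => if δ i then LinearIsometryEquiv.refl ℝ ℝ else LinearIsometryEquiv.neg ℝ)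

lemma signIso_apply {n : ℕ} (δ : Fin n → Bool) (a : EuclideanSpace ℝ (Fin n)) (i : Fin n) :
    signIso δ a i = rsign (δ i) * a i := by
  simp only [signIso, LinearIsometryEquiv.piLpCongrRight_apply, rsign]
  by_cases h : δ i <;> simp [h]

lemma integral_iso {n : ℕ} (O : EuclideanSpace ℝ (Fin n) ≃ₗᵢ[ℝ] EuclideanSpace ℝ (Fin n))
    (F : EuclideanSpace ℝ (Fin n) → ℝ) :
    ∫ a in Metric.closedBall 0 1, F (O a) = ∫ a in Metric.closedBall 0 1, F a := by
  have h := O.measurePreserving.setIntegral_preimage_emb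
    O.toHomeomorph.measurableEmbedding F (Metric.closedBall 0 1)
  rw [← h]
  congr 2
  ext a
  simp

lemma kwapien {QX : QuasiNormOn X} {QY : QuasiNormOn Y} {u : X →ₗ[ℝ] Y} {T C c : ℝ}
    (hC0 : 0 ≤ C) (hC : CotypeSq QY C) (hT : TypeBd QX QY u T)
    (hc : C * (QY.k ^ 2 * T) ≤ c ^ 2) : Crit QX QY u c := by
  intro n x y hxy
  obtain ⟨O, hO⟩ := exists_rotation x y hxy
  obtain ⟨F, hF, hF1, hF2⟩ := exists_smooth QY (fun i => u (x i))
  have hk := QY.one_le_k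
  rcases Nat.eq_zero_or_pos n with hn | hn
  · subst hn; simp
  let S : Set (EuclideanSpace ℝ (Fin n)) := Metric.closedBall 0 1
  have hInteg : ∀ {G : EuclideanSpace ℝ (Fin n) → ℝ}, Continuous G →
      MeasureTheory.IntegrableOn G S := fun hG =>
    hG.continuousOn.integrableOn_compact (isCompact_closedBall 0 1)
  let i₀ : Fin n := ⟨0, hn⟩
  let m : ℝ := ∫ a in S, a i₀ ^ 2
  have hm : ∀ i, ∫ a in S, a i ^ 2 = m := by
    intro i
    have := integral_iso (LinearIsometryEquiv.piLpCongrLeft 2 ℝ ℝ (Equiv.swap i i₀))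
      (fun a => a i₀ ^ 2)
    rw [show m = ∫ a in S, a i₀ ^ 2 from rfl, ← this]
    simp [LinearIsometryEquiv.piLpCongrLeft_apply, Equiv.piCongrLeft', S]
  have hcoord : ∀ i, Continuous fun a : EuclideanSpace ℝ (Fin n) => a i ^ 2 := by
    intro i; fun_prop
  have hmpos : 0 < m := by
    refine (MeasureTheory.setIntegral_pos_iff_support_of_nonneg_ae
      (Filter.Eventually.of_forall fun a => sq_nonneg _) (hInteg (hcoord i₀))).2 ?_
    have hopen : IsOpen ({a : EuclideanSpace ℝ (Fin n) | a i₀ ≠ 0} ∩ Metric.ball 0 1) := by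
      refine IsOpen.inter ?_ Metric.isOpen_ball
      exact isOpen_ne_fun (by fun_prop) continuous_const
    have hne : ({a : EuclideanSpace ℝ (Fin n) | a i₀ ≠ 0} ∩ Metric.ball 0 1).Nonempty := by
      refine ⟨EuclideanSpace.single i₀ (1/2:ℝ), ?_, ?_⟩
      · simp
      · simp [Metric.mem_ball, dist_zero_right]
        norm_num
    refine lt_of_lt_of_le (hopen.measure_pos MeasureTheory.volume hne)
      (MeasureTheory.measure_mono ?_)
    rintro a ⟨h1, h2⟩
    exact ⟨by simpa [Function.mem_support] using h1, Metric.ball_subset_closedBall h2⟩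
  have hsumint : ∀ w : Fin n → ℝ, ∫ a in S, ∑ i, a i ^ 2 * w i = m * ∑ i, w i := by
    intro w
    rw [MeasureTheory.integral_finsetSum]
    · simp_rw [MeasureTheory.integral_mul_const, hm, Finset.mul_sum]
    · intro i _
      exact hInteg ((hcoord i).mul continuous_const)
  have hFsq : Continuous fun a => F a ^ 2 := hF.pow 2
  -- lower estimate
  have hlow : m * ∑ i, QY.q (u (y i)) ^ 2 ≤ C * ∫ a in S, F a ^ 2 := by
    rw [← hsumint]
    calc ∫ a in S, ∑ i, a i ^ 2 * QY.q (u (y i)) ^ 2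
        ≤ ∫ a in S, C * ((2 ^ n)⁻¹ * ∑ ε : Fin n → Bool, F (O (signIso ε a)) ^ 2) := by
          refine MeasureTheory.integral_mono (hInteg (by fun_prop)) (hInteg ?_) ?_
          · refine continuous_const.mul (continuous_const.mul ?_)
            refine continuous_finsetSum _ fun ε _ => ?_
            exact hFsq.comp (O.continuous.comp (signIso ε).continuous)
          · intro a
            have h1 := hC n (fun i => a i • u (y i))
            simp only [QY.smul_eq, mul_pow, sq_abs] at h1
            refine h1.trans ?_
            simp only
            gcongr with ε
            · exact QY.nonneg _
            · refine le_trans (le_of_eq ?_) (hF1 _)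
              congr 1
              have h2 := congrArg u (hO (signIso ε a))
              simp only [map_sum, map_smul, signIso_apply] at h2
              rw [← h2]
              simp only [smul_smul]
      _ = C * ((2 ^ n)⁻¹ * ∑ ε : Fin n → Bool, ∫ a in S, F a ^ 2) := by
          rw [MeasureTheory.integral_const_mul, MeasureTheory.integral_const_mul,
            MeasureTheory.integral_finsetSum]
          · congr 2
            refine Finset.sum_congr rfl fun ε _ => ?_
            exact integral_iso ((signIso ε).trans O) (fun a => F a ^ 2)
          · intro ε _
            exact hInteg (hFsq.comp (O.continuous.comp (signIso ε).continuous))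
      _ = _ := by simp
  have hup : ∫ a in S, F a ^ 2 ≤ QY.k ^ 2 * T * (m * ∑ i, QX.q (x i) ^ 2) := by
    rw [← hsumint, ← MeasureTheory.integral_const_mul]
    calc ∫ a in S, F a ^ 2 = (2 ^ n)⁻¹ * ∑ ε : Fin n → Bool, ∫ a in S, F a ^ 2 := by simp
      _ = (2 ^ n)⁻¹ * ∑ ε : Fin n → Bool, ∫ a in S, F (signIso ε a) ^ 2 := by
          congr 1
          refine Finset.sum_congr rfl fun ε _ => ?_
          exact (integral_iso (signIso ε) (fun a => F a ^ 2)).symm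
      _ = ∫ a in S, (2 ^ n)⁻¹ * ∑ ε : Fin n → Bool, F (signIso ε a) ^ 2 := by
          rw [MeasureTheory.integral_const_mul, MeasureTheory.integral_finsetSum]
          intro ε _
          exact hInteg (hFsq.comp (signIso ε).continuous)
      _ ≤ _ := by
          refine MeasureTheory.integral_mono (hInteg ?_) (hInteg (by fun_prop)) ?_
          · refine continuous_const.mul ?_
            refine continuous_finsetSum _ fun ε _ => ?_
            exact hFsq.comp (signIso ε).continuous
          · intro a
            have h1 := hT n (fun i => a i • x i)
            simp only [QX.smul_eq, mul_pow, sq_abs, map_smul, smul_smul] at h1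
            have h2 : ∀ ε : Fin n → Bool, F (signIso ε a) ^ 2 ≤
                QY.k ^ 2 * QY.q (∑ i, (rsign (ε i) * a i) • u (x i)) ^ 2 := by
              intro ε
              rw [← mul_pow]
              have h3 := hF2 (signIso ε a)
              have h4 := (QY.nonneg _).trans (hF1 (signIso ε a))
              simp only [signIso_apply] at h3
              exact pow_le_pow_left₀ h4 h3 2
            calc (2 ^ n)⁻¹ * ∑ ε : Fin n → Bool, F (signIso ε a) ^ 2
                ≤ (2 ^ n)⁻¹ * ∑ ε : Fin n → Bool,
                  QY.k ^ 2 * QY.q (∑ i, (rsign (ε i) * a i) • u (x i)) ^ 2 := by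
                  gcongr with ε
                  exact h2 ε
              _ = QY.k ^ 2 * ((2 ^ n)⁻¹ * ∑ ε : Fin n → Bool,
                  QY.q (∑ i, (rsign (ε i) * a i) • u (x i)) ^ 2) := by
                  rw [← Finset.mul_sum]; ring
              _ ≤ QY.k ^ 2 * (T * ∑ i, a i ^ 2 * QX.q (x i) ^ 2) := by gcongr
              _ = _ := by ring
  have hs : 0 ≤ ∑ i, QX.q (x i) ^ 2 := Finset.sum_nonneg fun i _ => sq_nonneg _
  have hfin : m * ∑ i, QY.q (u (y i)) ^ 2 ≤ m * (c ^ 2 * ∑ i, QX.q (x i) ^ 2) := by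
    calc _ ≤ _ := hlow
      _ ≤ C * (QY.k ^ 2 * T * (m * ∑ i, QX.q (x i) ^ 2)) := by gcongr
      _ = C * (QY.k ^ 2 * T) * (m * ∑ i, QX.q (x i) ^ 2) := by ring
      _ ≤ c ^ 2 * (m * ∑ i, QX.q (x i) ^ 2) := by gcongr
      _ = _ := by ring
  exact le_of_mul_le_mul_left hfin hmpos

end Kwapien
end AGT

namespace AGT

section Envelope

variable {X : Type uX} {Y : Type uY} [AddCommGroup X] [Module ℝ X] [AddCommGroup Y] [Module ℝ Y]

/-- Convex hull of the unit ball. -/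
def hull (Q : QuasiNormOn X) : Set X := convexHull ℝ {x | Q.q x ≤ 1}

open scoped Pointwise in
lemma mem_smul_ball (Q : QuasiNormOn X) {r : ℝ} (hr : 0 < r) {x : X} (hx : Q.q x ≤ r) :
    x ∈ r • hull Q := by
  rw [Set.mem_smul_set_iff_inv_smul_mem₀ hr.ne']
  refine subset_convexHull ℝ _ ?_
  simp only [Set.mem_ofPred_eq, Q.smul_eq, abs_inv, abs_of_pos hr]
  rw [inv_mul_le_iff₀ hr, mul_one]
  exact hx

lemma hull_balanced (Q : QuasiNormOn X) : Balanced ℝ (hull Q) := by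
  refine Balanced.convexHull ?_
  rw [balanced_iff_smul_mem]
  intro a ha x hx
  simp only [Set.mem_ofPred_eq, Q.smul_eq] at hx ⊢
  rw [Real.norm_eq_abs] at ha
  exact mul_le_one₀ ha (Q.nonneg _) hx

lemma hull_absorbent (Q : QuasiNormOn X) : Absorbent ℝ (hull Q) := by
  intro x
  rw [absorbs_iff_norm]
  refine ⟨Q.q x + 1, fun c hc => ?_⟩
  have hq := Q.nonneg x
  rw [Real.norm_eq_abs] at hc
  have hc0 : c ≠ 0 := by
    rintro rfl
    rw [abs_zero] at hc
    linarith
  have hc1 : 0 < |c| := abs_pos.2 hc0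
  rw [Set.singleton_subset_iff, Set.mem_smul_set_iff_inv_smul_mem₀ hc0]
  refine subset_convexHull ℝ _ ?_
  simp only [Set.mem_ofPred_eq, Q.smul_eq, abs_inv]
  rw [inv_mul_le_iff₀ hc1, mul_one]
  linarith

/-- The seminorm of the Banach envelope. -/
noncomputable def nc (Q : QuasiNormOn X) : Seminorm ℝ X :=
  gaugeSeminorm (hull_balanced Q) (convex_convexHull ℝ _) (hull_absorbent Q)

lemma nc_le_q (Q : QuasiNormOn X) (x : X) : nc Q x ≤ Q.q x := by
  refine le_of_forall_gt_imp_ge_of_dense fun r hr => ?_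
  have h0 := lt_of_le_of_lt (Q.nonneg x) hr
  exact gauge_le_of_mem h0.le (mem_smul_ball Q h0 hr.le)

lemma le_nc (Q : QuasiNormOn X) {F : X → ℝ} {b : ℝ} (hb : 0 ≤ b)
    (hF : ∀ a : ℝ, 0 < a → ∀ x, F (a • x) = a * F x) (h : ∀ x ∈ hull Q, F x ≤ b) (x : X) :
    F x ≤ b * nc Q x := by
  have key : ∀ r, nc Q x < r → F x ≤ b * r := by
    intro r hr
    obtain ⟨s, hs0, hsr, y, hy, rfl⟩ := exists_lt_of_gauge_lt (hull_absorbent Q) hr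
    simp only [hF s hs0]
    calc s * F y ≤ s * b := by gcongr; exact h y hy
      _ ≤ r * b := by gcongr
      _ = _ := mul_comm _ _
  refine le_of_forall_pos_le_add fun δ hδ => ?_
  have h1 := key (nc Q x + δ / (b + 1)) (by have : 0 < δ / (b+1) := by positivity
                                            linarith)
  refine h1.trans ?_
  rw [mul_add]
  gcongr
  rw [mul_div_assoc', div_le_iff₀ (by positivity)]
  nlinarith

lemma exists_halfspace (Q : QuasiNormOn X) (f : X →ₗ[ℝ] ℝ) {x : X} (hx : x ∈ hull Q) :
    ∃ z, Q.q z ≤ 1 ∧ f z ≤ f x := by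
  by_contra! hcon
  have h1 : hull Q ⊆ {z | f x < f z} :=
    convexHull_min (fun z hz => hcon z hz) (convex_halfSpace_gt f.isLinear _)
  have h2 : f x < f x := h1 hx
  exact lt_irrefl _ h2

lemma maurey_sample (Q : QuasiNormOn X) (B : X →ₗ[ℝ] X →ₗ[ℝ] ℝ) (hs : ∀ x y, B x y = B y x)
    (h0 : ∀ x, 0 ≤ B x x) {c : ℝ} (hc : ∀ x, B x x ≤ c ^ 2 * Q.q x ^ 2) {x : X}
    (hx : x ∈ hull Q) (N : ℕ) :
    ∃ z : Fin N → X, (∀ i, Q.q (z i) ≤ 1) ∧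
      B (∑ i, z i - (N:ℝ) • x) (∑ i, z i - (N:ℝ) • x) ≤ N * c ^ 2 := by
  induction N with
  | zero => exact ⟨Fin.elim0, fun i => i.elim0, by simp⟩
  | succ N ih =>
    obtain ⟨z, hz, hB⟩ := ih
    set s := ∑ i, z i - (N:ℝ) • x with hsdef
    obtain ⟨w, hw, hw2⟩ := exists_halfspace Q (B (s - x)) hx
    refine ⟨Fin.snoc z w, fun i => ?_, ?_⟩
    · refine Fin.lastCases ?_ (fun j => ?_) i
      · simpa using hw
      · simpa using hz j
    · have h1 : ∑ i, (Fin.snoc z w : Fin (N+1) → X) i - ((N + 1 : ℕ):ℝ) • x = s + w - x := by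
        rw [Fin.sum_univ_castSucc]
        simp only [Fin.snoc_castSucc, Fin.snoc_last, hsdef]
        push_cast
        rw [add_smul, one_smul]
        abel
      rw [h1]
      have h2 : B (s + w - x) (s + w - x) = B s s + 2 * (B (s - x) w - B (s - x) x)
          + B w w - B x x := by
        simp only [map_add, map_sub, LinearMap.add_apply, LinearMap.sub_apply]
        rw [hs w s, hs x s, hs x w]
        ring
      rw [h2]
      have h3 := hc w
      have h4 := h0 x
      have h5 : Q.q w ^ 2 ≤ 1 := pow_le_one₀ (Q.nonneg _) hw
      have h6 : c ^ 2 * Q.q w ^ 2 ≤ c ^ 2 * 1 := by gcongr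
      push_cast
      linarith

lemma nc_bound {QX : QuasiNormOn X} {QY : QuasiNormOn Y} {u : X →ₗ[ℝ] Y}
    (B : X →ₗ[ℝ] X →ₗ[ℝ] ℝ) (hs : ∀ x y, B x y = B y x)
    (h1 : ∀ x, QY.q (u x) ^ 2 ≤ B x x) {c U : ℝ} (hc0 : 0 ≤ c) (hU : 0 ≤ U)
    (hc : ∀ x, B x x ≤ c ^ 2 * QX.q x ^ 2) (hu : ∀ x, QY.q (u x) ≤ U * QX.q x)
    (N : ℕ) (hN : 0 < N) (x : X) :
    QY.q (u x) ≤ (QY.k * (QY.k ^ N * U + c / √N)) * nc QX x := by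
  have hk := QY.one_le_k
  have hN' : (0:ℝ) < N := by exact_mod_cast hN
  refine le_nc QX (F := fun x => QY.q (u x)) (by positivity) ?_ ?_ x
  · intro a ha x
    simp [QY.smul_eq, abs_of_pos ha]
  intro x hx
  obtain ⟨z, hz, hB⟩ := maurey_sample QX B hs (fun x => (sq_nonneg _).trans (h1 x)) hc hx N
  set s := ∑ i, z i - (N:ℝ) • x with hsdef
  have hx' : u x = (N:ℝ)⁻¹ • (∑ i, u (z i)) + (-(N:ℝ)⁻¹) • u s := by
    rw [hsdef, map_sub, map_sum, map_smul, neg_smul, smul_sub, smul_smul,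
      inv_mul_cancel₀ hN'.ne', one_smul]
    abel
  have hs1 : QY.q (u s) ≤ √N * c := by
    have := (h1 s).trans hB
    have h3 := Real.le_sqrt_of_sq_le this
    rwa [Real.sqrt_mul (by positivity), Real.sqrt_sq hc0] at h3
  have hz1 : QY.q (∑ i, u (z i)) ≤ QY.k ^ N * (N * U) := by
    have h2 := q_sum_le QY Finset.univ (fun i => u (z i))
    rw [Finset.card_univ, Fintype.card_fin] at h2
    refine h2.trans ?_
    gcongr
    calc ∑ i, QY.q (u (z i)) ≤ ∑ i : Fin N, U := by
          refine Finset.sum_le_sum fun i _ => (hu _).trans ?_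
          exact mul_le_of_le_one_right hU (hz i)
      _ = _ := by simp
  have h4 := QY.tri ((N:ℝ)⁻¹ • (∑ i, u (z i))) ((-(N:ℝ)⁻¹) • u s)
  rw [← hx', QY.smul_eq, QY.smul_eq, abs_neg, abs_inv, abs_of_pos hN'] at h4
  refine h4.trans ?_
  have h5 : (N:ℝ)⁻¹ * QY.q (∑ i, u (z i)) ≤ QY.k ^ N * U := by
    rw [inv_mul_le_iff₀ hN']
    calc _ ≤ _ := hz1
      _ = _ := by ring
  have h6 : (N:ℝ)⁻¹ * QY.q (u s) ≤ c / √N := by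
    rw [inv_mul_le_iff₀ hN']
    refine hs1.trans (le_of_eq ?_)
    have : √(N:ℝ) * √N = N := Real.mul_self_sqrt hN'.le
    have h7 : √(N:ℝ) ≠ 0 := by positivity
    field_simp
    rw [sq, this]
    ring
  gcongr

lemma B_le_nc {QX : QuasiNormOn X} (B : X →ₗ[ℝ] X →ₗ[ℝ] ℝ) (hs : ∀ x y, B x y = B y x)
    (h0 : ∀ x, 0 ≤ B x x) {c : ℝ} (hc0 : 0 ≤ c)
    (hc : ∀ x, B x x ≤ c ^ 2 * QX.q x ^ 2) (x : X) :
    B x x ≤ c ^ 2 * nc QX x ^ 2 := by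
  have h := le_nc QX (F := fun x => √(B x x)) hc0 (by
    intro a ha x
    simp only [map_smul, LinearMap.smul_apply, smul_eq_mul]
    rw [← mul_assoc, Real.sqrt_mul (by positivity), Real.sqrt_mul_self ha.le]) (by
    intro x hx
    refine Real.sqrt_le_iff.2 ⟨hc0, ?_⟩
    obtain ⟨w, hw, hw2⟩ := exists_halfspace QX (-B x) hx
    simp only [LinearMap.neg_apply, neg_le_neg_iff] at hw2
    have h2 := h0 (w - x)
    simp only [map_sub, LinearMap.sub_apply] at h2
    rw [hs w x] at h2
    have h3 := hc w
    have h5 : QX.q w ^ 2 ≤ 1 := pow_le_one₀ (QX.nonneg _) hw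
    have h6 : c ^ 2 * QX.q w ^ 2 ≤ c ^ 2 * 1 := by gcongr
    linarith) x
  have := Real.sqrt_le_iff.1 h
  rw [← mul_pow]
  exact this.2

end Envelope
end AGT

namespace AGT

section Walsh

/-- Walsh functions. -/
noncomputable def wal {n : ℕ} (S : Finset (Fin n)) (ε : Fin n → Bool) : ℝ := ∏ i ∈ S, rsign (ε i)

lemma sum_prod_cube {n : ℕ} (g : Fin n → Bool → ℝ) :
    ∑ ε : Fin n → Bool, ∏ i, g i (ε i) = ∏ i, ∑ b, g i b := (Fintype.prod_sum _).symm

lemma wal_orth {n : ℕ} (S T : Finset (Fin n)) :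
    ∑ ε : Fin n → Bool, wal S ε * wal T ε = if S = T then 2 ^ n else 0 := by
  have h1 : ∀ ε : Fin n → Bool, wal S ε * wal T ε =
      ∏ i, ((fun (i : Fin n) (b : Bool) => (if i ∈ S then rsign b else 1) *
        (if i ∈ T then rsign b else 1)) i (ε i)) := by
    intro ε
    simp only [wal, Finset.prod_mul_distrib, Finset.prod_ite_mem, Finset.univ_inter]
  refine (Finset.sum_congr rfl fun ε _ => h1 ε).trans ((sum_prod_cube
    (fun (i : Fin n) (b : Bool) => (if i ∈ S then rsign b else 1) *
        (if i ∈ T then rsign b else 1))).trans ?_)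
  have h2 : ∀ i : Fin n, ∑ b : Bool, (if i ∈ S then rsign b else 1) *
      (if i ∈ T then rsign b else 1) = if (i ∈ S ↔ i ∈ T) then 2 else 0 := by
    intro i
    by_cases hS : i ∈ S <;> by_cases hT : i ∈ T <;> simp [hS, hT, rsign] <;> norm_num
  simp_rw [h2]
  split_ifs with h
  · subst h
    simp
  · have : ∃ i, ¬ (i ∈ S ↔ i ∈ T) := by
      by_contra! hc
      exact h (Finset.ext hc)
    obtain ⟨i, hi⟩ := this
    exact Finset.prod_eq_zero (Finset.mem_univ i) (by simp [hi])

lemma wal_singleton {n : ℕ} (i : Fin n) (ε : Fin n → Bool) : wal {i} ε = rsign (ε i) := by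
  simp [wal]

lemma rsign_orth {n : ℕ} (i j : Fin n) :
    ∑ ε : Fin n → Bool, rsign (ε i) * rsign (ε j) = if i = j then 2 ^ n else 0 := by
  have := wal_orth {i} {j}
  simpa only [wal_singleton, Finset.singleton_inj] using this

end Walsh

section Quot

/-- Lifting through a quotient map. -/
lemma quot_lift {V E : Type*} [AddCommGroup V] [Module ℝ V] [AddCommGroup E] [Module ℝ E]
    (J : V →ₗ[ℝ] E) (hJ : Function.Surjective J) (p : V → ℝ) (p0 : ∀ v, 0 ≤ p v)
    (hom : ∀ c : ℝ, 0 < c → ∀ v, p (c • v) = c * p v)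
    (hadd : ∀ v w, p (v + w) ≤ p v + p w) (x : E) :
    ∃ F : E →ₗ[ℝ] ℝ, (∀ v, F (J v) ≤ p v) ∧ ∀ δ > 0, ∃ v, J v = x ∧ p v < F x + δ := by
  let A : E → Set ℝ := fun x => p '' {v | J v = x}
  have hne : ∀ x, (A x).Nonempty := fun x => by
    obtain ⟨v, hv⟩ := hJ x
    exact ⟨p v, v, hv, rfl⟩
  have hbd : ∀ x, BddBelow (A x) := fun x => ⟨0, by
    rintro _ ⟨v, -, rfl⟩
    exact p0 v⟩
  have hlt : ∀ x, ∀ δ > 0, ∃ v, J v = x ∧ p v < sInf (A x) + δ := by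
    intro x δ hδ
    obtain ⟨_, ⟨v, hv, rfl⟩, h⟩ := exists_lt_of_csInf_lt (hne x) (lt_add_of_pos_right _ hδ)
    exact ⟨v, hv, h⟩
  have hle : ∀ v, sInf (A (J v)) ≤ p v := fun v => csInf_le (hbd _) ⟨v, rfl, rfl⟩
  have hhom : ∀ c : ℝ, 0 < c → ∀ x, sInf (A (c • x)) ≤ c * sInf (A x) := by
    intro c hc x
    refine le_of_forall_pos_le_add fun δ hδ => ?_
    obtain ⟨v, rfl, hv⟩ := hlt x (δ / c) (by positivity)
    rw [← map_smul]
    refine (hle _).trans ?_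
    rw [hom c hc]
    calc c * p v ≤ c * (sInf (A (J v)) + δ / c) := by gcongr
      _ = _ := by field_simp
  obtain ⟨F, hF1, hF2⟩ := exists_dominated (fun x => sInf (A x)) (by
      intro c hc x
      refine le_antisymm (hhom c hc x) ?_
      have := hhom c⁻¹ (by positivity) (c • x)
      rw [smul_smul, inv_mul_cancel₀ hc.ne', one_smul] at this
      rwa [le_inv_mul_iff₀ hc] at this) (by
      intro x y
      refine le_of_forall_pos_le_add fun δ hδ => ?_
      obtain ⟨v, rfl, hv⟩ := hlt x (δ / 2) (by positivity)
      obtain ⟨w, rfl, hw⟩ := hlt y (δ / 2) (by positivity)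
      have h1 := hle (v + w)
      have h2 := hadd v w
      rw [map_add] at h1
      linarith) x
  refine ⟨F, fun v => (hF2 _).trans (hle v), fun δ hδ => ?_⟩
  rw [hF1]
  exact hlt x δ hδ

end Quot

section Duality

variable {X : Type uX} [AddCommGroup X] [Module ℝ X]

/-- The `L²` seminorm of an `X`-valued function on the cube. -/
noncomputable def L2 (Q : QuasiNormOn X) {n : ℕ} (Φ : (Fin n → Bool) → X) : ℝ :=
  √((2 ^ n)⁻¹ * ∑ ε, nc Q (Φ ε) ^ 2)

lemma L2_smul (Q : QuasiNormOn X) {n : ℕ} (c : ℝ) (hc : 0 < c) (Φ : (Fin n → Bool) → X) :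
    L2 Q (c • Φ) = c * L2 Q Φ := by
  have : (2 ^ n)⁻¹ * ∑ ε, nc Q ((c • Φ) ε) ^ 2 = c ^ 2 * ((2 ^ n)⁻¹ * ∑ ε, nc Q (Φ ε) ^ 2) := by
    simp only [Pi.smul_apply, map_smul_eq_mul, mul_pow, ← Finset.mul_sum, Real.norm_eq_abs, sq_abs]
    ring
  rw [L2, this, Real.sqrt_mul (by positivity), Real.sqrt_sq hc.le]
  rfl

lemma L2_add (Q : QuasiNormOn X) {n : ℕ} (Φ Ψ : (Fin n → Bool) → X) :
    L2 Q (Φ + Ψ) ≤ L2 Q Φ + L2 Q Ψ := by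
  have key : ∀ Φ : (Fin n → Bool) → X, L2 Q Φ = √((2 ^ n)⁻¹) *
      ‖(WithLp.toLp 2 (fun ε => nc Q (Φ ε)) : EuclideanSpace ℝ (Fin n → Bool))‖ := by
    intro Φ
    rw [L2, EuclideanSpace.norm_eq, Real.sqrt_mul (by positivity)]
    simp
  rw [key Φ, key Ψ, ← mul_add]
  calc L2 Q (Φ + Ψ) ≤ √((2 ^ n)⁻¹) *
      ‖(WithLp.toLp 2 (fun ε => nc Q (Φ ε)) : EuclideanSpace ℝ (Fin n → Bool)) +
        WithLp.toLp 2 (fun ε => nc Q (Ψ ε))‖ := by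
        rw [L2, EuclideanSpace.norm_eq, Real.sqrt_mul (by positivity)]
        gcongr with ε
        simp only [PiLp.add_apply, Pi.add_apply, Real.norm_eq_abs]
        rw [abs_of_nonneg (by positivity)]
        exact map_add_le_add _ _ _
    _ ≤ _ := by gcongr; exact norm_add_le _ _

lemma L2_le_q (Q : QuasiNormOn X) {n : ℕ} (Φ : (Fin n → Bool) → X) :
    L2 Q Φ ≤ √((2 ^ n)⁻¹ * ∑ ε, Q.q (Φ ε) ^ 2) := by
  rw [L2]
  gcongr with ε
  exact nc_le_q Q _

lemma dualNorm_spec (Q : QuasiNormOn X) {f : X →ₗ[ℝ] ℝ} (hf : DualBdd Q.q f) :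
    0 ≤ dualNorm Q.q f ∧ ∀ x, |f x| ≤ dualNorm Q.q f * Q.q x := by
  have h0 : 0 ≤ dualNorm Q.q f := Real.sInf_nonneg fun M hM => hM.1
  refine ⟨h0, fun x => ?_⟩
  refine le_of_forall_pos_le_add fun δ hδ => ?_
  have hq := Q.nonneg x
  have hne : {M | 0 ≤ M ∧ ∀ x, |f x| ≤ M * Q.q x}.Nonempty := hf
  obtain ⟨M, hM, hlt⟩ := exists_lt_of_csInf_lt hne
    (lt_add_of_pos_right _ (show 0 < δ / (Q.q x + 1) by positivity))
  refine (hM.2 x).trans ?_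
  calc M * Q.q x ≤ (dualNorm Q.q f + δ / (Q.q x + 1)) * Q.q x := by
        gcongr
        exact hlt.le
    _ = dualNorm Q.q f * Q.q x + δ / (Q.q x + 1) * Q.q x := by ring
    _ ≤ _ := by
        gcongr
        rw [div_mul_eq_mul_div, div_le_iff₀ (by positivity)]
        nlinarith

lemma dualNorm_norming (Q : QuasiNormOn X) {f : X →ₗ[ℝ] ℝ} (hf : DualBdd Q.q f) :
    ∃ z, Q.q z ≤ 1 ∧ dualNorm Q.q f / 2 ≤ f z := by
  obtain ⟨h0, h1⟩ := dualNorm_spec Q hf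
  rcases h0.eq_or_lt with h | h
  · exact ⟨0, by simp [q_zero], by simp [← h]⟩
  · have : dualNorm Q.q f / 2 ∉ {M | 0 ≤ M ∧ ∀ x, |f x| ≤ M * Q.q x} := by
      intro hm
      have : dualNorm Q.q f ≤ dualNorm Q.q f / 2 := csInf_le ⟨0, fun M hM => hM.1⟩ hm
      linarith
    have hx : ∃ x, dualNorm Q.q f / 2 * Q.q x < |f x| := by
      by_contra! hc
      exact this ⟨by positivity, hc⟩
    obtain ⟨x, hx⟩ := hx
    have hq : 0 < Q.q x := by
      refine lt_of_le_of_ne (Q.nonneg x) fun hq => ?_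
      have hx0 := (Q.eq_zero_iff x).1 hq.symm
      subst hx0
      simp [q_zero] at hx
    rcases le_total 0 (f x) with hs | hs
    · rw [abs_of_nonneg hs] at hx
      refine ⟨(Q.q x)⁻¹ • x, ?_, ?_⟩
      · rw [Q.smul_eq, abs_inv, abs_of_pos hq, inv_mul_cancel₀ hq.ne']
      · rw [map_smul, smul_eq_mul, le_inv_mul_iff₀ hq]
        linarith
    · rw [abs_of_nonpos hs] at hx
      refine ⟨(-(Q.q x)⁻¹) • x, ?_, ?_⟩
      · rw [Q.smul_eq, abs_neg, abs_inv, abs_of_pos hq, inv_mul_cancel₀ hq.ne']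
      · rw [map_smul, smul_eq_mul, neg_mul, ← mul_neg, le_inv_mul_iff₀ hq]
        linarith

/-- The Rademacher coefficients. -/
noncomputable def radc (X : Type uX) [AddCommGroup X] [Module ℝ X] (n : ℕ) :
    ((Fin n → Bool) → X) →ₗ[ℝ] (Fin n → X) where
  toFun Φ i := ((2:ℝ) ^ n)⁻¹ • ∑ ε, rsign (ε i) • Φ ε
  map_add' Φ Ψ := by
    ext i
    simp [Finset.sum_add_distrib]
  map_smul' c Φ := by
    ext i
    simp only [Pi.smul_apply, RingHom.id_apply, Finset.smul_sum]
    refine Finset.sum_congr rfl fun ε _ => ?_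
    simp only [smul_smul]
    congr 1
    ring

lemma radc_apply {n : ℕ} (Φ : (Fin n → Bool) → X) (i : Fin n) :
    radc X n Φ i = ((2:ℝ) ^ n)⁻¹ • ∑ ε, rsign (ε i) • Φ ε := rfl

lemma radc_rad {n : ℕ} (x : Fin n → X) :
    radc X n (fun ε => ∑ i, rsign (ε i) • x i) = x := by
  ext i
  rw [radc_apply]
  simp only [Finset.smul_sum, smul_smul]
  rw [Finset.sum_comm]
  simp only [← Finset.sum_smul, ← Finset.mul_sum, rsign_orth]
  simp [ite_smul]

/-- Squared form of the dual cotype condition. -/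
lemma dual_sq (Q : QuasiNormOn X) (h : DualHasCotype2 Q.q) :
    ∃ C, 0 < C ∧ ∀ (n : ℕ) (f : Fin n → (X →ₗ[ℝ] ℝ)), (∀ i, DualBdd Q.q (f i)) →
    ∑ i, dualNorm Q.q (f i) ^ 2 ≤
      C ^ 2 * ((2 ^ n)⁻¹ * ∑ ε : Fin n → Bool, dualNorm Q.q (∑ i, rsign (ε i) • f i) ^ 2) := by
  obtain ⟨C, hC, h⟩ := h
  refine ⟨C, hC, fun n f hf => ?_⟩
  have := h n f hf
  simp only [Real.rpow_two, ← Real.sqrt_eq_rpow] at this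
  have h2 := Real.sqrt_le_iff.1 this
  refine h2.2.trans (le_of_eq ?_)
  rw [mul_pow, Real.sq_sqrt (by positivity)]

lemma sum_dualBdd (Q : QuasiNormOn X) {n : ℕ} {f : Fin n → (X →ₗ[ℝ] ℝ)}
    (hf : ∀ i, DualBdd Q.q (f i)) (ε : Fin n → Bool) : DualBdd Q.q (∑ i, rsign (ε i) • f i) := by
  choose M hM0 hM using hf
  refine ⟨∑ i, M i, Finset.sum_nonneg fun i _ => hM0 i, fun x => ?_⟩
  rw [LinearMap.sum_apply, Finset.sum_mul]
  refine (Finset.abs_sum_le_sum_abs _ _).trans (Finset.sum_le_sum fun i _ => ?_)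
  rw [LinearMap.smul_apply, smul_eq_mul, abs_mul, abs_rsign, one_mul]
  exact hM i x

lemma duality (Q : QuasiNormOn X) (h : DualHasCotype2 Q.q) :
    ∃ C1 : ℝ, 0 < C1 ∧ ∀ (n : ℕ) (x : Fin n → X), ∃ Φ : (Fin n → Bool) → X, radc X n Φ = x ∧
      (2 ^ n)⁻¹ * ∑ ε, nc Q (Φ ε) ^ 2 ≤ C1 * ∑ i, Q.q (x i) ^ 2 := by
  obtain ⟨C, hC, h⟩ := dual_sq Q h
  refine ⟨(3 * C) ^ 2, by positivity, fun n x => ?_⟩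
  set R := ∑ i, Q.q (x i) ^ 2 with hR
  have hR0 : 0 ≤ R := by positivity
  rcases hR0.eq_or_lt with hz | hpos
  · have hx : x = 0 := by
      ext i
      have := (Finset.sum_eq_zero_iff_of_nonneg (fun i _ => sq_nonneg (Q.q (x i)))).1 hz.symm i
        (Finset.mem_univ i)
      exact (Q.eq_zero_iff _).1 (pow_eq_zero_iff two_ne_zero |>.1 this)
    refine ⟨0, by rw [hx, map_zero], ?_⟩
    simp only [Pi.zero_apply, map_zero]
    simp
    positivity
  obtain ⟨F, hF, hF2⟩ := quot_lift (radc X n) (fun x => ⟨_, radc_rad x⟩) (L2 Q)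
    (fun v => Real.sqrt_nonneg _) (fun c hc v => L2_smul Q c hc v) (L2_add Q) x
  let f : Fin n → (X →ₗ[ℝ] ℝ) := fun i => F ∘ₗ LinearMap.single ℝ (fun _ => X) i
  have hFf : ∀ y : Fin n → X, F y = ∑ i, f i (y i) := by
    intro y
    conv_lhs => rw [← Finset.univ_sum_single y]
    rw [map_sum]
    rfl
  have hf1 : ∀ i z, f i z ≤ Q.q z := by
    intro i z
    have h1 := hF (fun ε => ∑ j, rsign (ε j) • (Pi.single i z : Fin n → X) j)
    rw [radc_rad] at h1
    refine h1.trans ((L2_le_q Q _).trans (le_of_eq ?_))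
    have : ∀ ε : Fin n → Bool, Q.q (∑ j, rsign (ε j) • (Pi.single i z : Fin n → X) j) = Q.q z := by
      intro ε
      rw [Finset.sum_eq_single i]
      · rw [Pi.single_eq_same, Q.smul_eq, abs_rsign, one_mul]
      · intro j _ hj
        rw [Pi.single_eq_of_ne hj, smul_zero]
      · simp
    simp only [this, Finset.sum_const, Finset.card_univ, Fintype.card_fun, Fintype.card_bool,
      Fintype.card_fin, nsmul_eq_mul]
    push_cast
    rw [inv_mul_cancel_left₀ (by positivity), Real.sqrt_sq (Q.nonneg _)]
  have hf : ∀ i, DualBdd Q.q (f i) := by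
    refine fun i => ⟨1, zero_le_one, fun z => ?_⟩
    rw [one_mul, abs_le]
    have h1 := hf1 i (-z)
    rw [map_neg, q_neg] at h1
    exact ⟨by linarith, hf1 i z⟩
  have hg := sum_dualBdd Q hf
  set D : (Fin n → Bool) → ℝ := fun ε => dualNorm Q.q (∑ i, rsign (ε i) • f i) with hD
  have hD0 : ∀ ε, 0 ≤ D ε := fun ε => (dualNorm_spec Q (hg ε)).1
  choose z hz1 hz2 using fun ε => dualNorm_norming Q (hg ε)
  have hA : (2 ^ n)⁻¹ * ∑ ε, D ε ^ 2 ≤ 4 := by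
    set A := (2 ^ n)⁻¹ * ∑ ε, D ε ^ 2 with hAdef
    have hA0 : 0 ≤ A := by positivity
    have h1 := (hF (fun ε => D ε • z ε)).trans (L2_le_q Q _)
    have h2 : √((2 ^ n)⁻¹ * ∑ ε, Q.q (D ε • z ε) ^ 2) ≤ √A := by
      rw [hAdef]
      gcongr with ε
      · exact Q.nonneg _
      · rw [Q.smul_eq, abs_of_nonneg (hD0 ε)]
        exact mul_le_of_le_one_right (hD0 ε) (hz1 ε)
    have h3 : F (radc X n (fun ε => D ε • z ε)) =
        (2 ^ n)⁻¹ * ∑ ε, D ε * (∑ i, rsign (ε i) • f i) (z ε) := by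
      rw [hFf]
      simp only [radc_apply, map_smul, map_sum, smul_eq_mul, ← Finset.mul_sum,
        LinearMap.sum_apply, LinearMap.smul_apply]
      rw [Finset.sum_comm]
      congr 1
      refine Finset.sum_congr rfl fun ε _ => ?_
      rw [Finset.mul_sum]
      refine Finset.sum_congr rfl fun i _ => ?_
      ring
    have h4 : A / 2 ≤ F (radc X n (fun ε => D ε • z ε)) := by
      rw [h3, hAdef, mul_div_assoc, Finset.sum_div]
      gcongr with ε
      calc D ε ^ 2 / 2 = D ε * (D ε / 2) := by ring
        _ ≤ _ := by
          gcongr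
          · exact hD0 ε
          · exact hz2 ε
    have h5 : A / 2 ≤ √A := by linarith
    have h6 := Real.sq_sqrt hA0
    have h7 := Real.sqrt_nonneg A
    nlinarith
  have hsum : ∑ i, dualNorm Q.q (f i) ^ 2 ≤ (2 * C) ^ 2 := by
    refine (h n f hf).trans ?_
    calc _ ≤ C ^ 2 * 4 := by gcongr
      _ = _ := by ring
  have hFx : F x ≤ 2 * C * √R := by
    rw [hFf]
    calc ∑ i, f i (x i) ≤ ∑ i, dualNorm Q.q (f i) * Q.q (x i) :=
          Finset.sum_le_sum fun i _ => (le_abs_self _).trans ((dualNorm_spec Q (hf i)).2 _)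
      _ ≤ √(∑ i, dualNorm Q.q (f i) ^ 2) * √(∑ i, Q.q (x i) ^ 2) :=
          Real.sum_mul_le_sqrt_mul_sqrt _ _ _
      _ ≤ _ := by
          gcongr
          exact Real.sqrt_le_iff.2 ⟨by positivity, hsum⟩
  have hsR : 0 < √R := Real.sqrt_pos.2 hpos
  obtain ⟨Φ, hΦ, hlt⟩ := hF2 (C * √R) (by positivity)
  refine ⟨Φ, hΦ, ?_⟩
  have h8 : L2 Q Φ ≤ 3 * C * √R := by linarith
  have h9 := (Real.sqrt_le_iff.1 h8).2
  rwa [mul_pow, Real.sq_sqrt hR0] at h9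

end Duality
end AGT

namespace AGT

section Noise

/-- The noise kernel. -/
noncomputable def ker {n : ℕ} (τ : ℝ) (ε ε' : Fin n → Bool) : ℝ :=
  ∏ i, (1 + τ * (rsign (ε i) * rsign (ε' i)))

lemma ker_symm {n : ℕ} (τ : ℝ) (ε ε' : Fin n → Bool) : ker τ ε ε' = ker τ ε' ε := by
  unfold ker
  simp_rw [mul_comm (rsign (ε _))]

lemma ker_nonneg {n : ℕ} {τ : ℝ} (hτ : |τ| ≤ 1) (ε ε' : Fin n → Bool) : 0 ≤ ker τ ε ε' := by
  refine Finset.prod_nonneg fun i _ => ?_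
  have h : |τ * (rsign (ε i) * rsign (ε' i))| ≤ 1 := by
    rw [abs_mul, abs_mul, abs_rsign, abs_rsign]
    simpa using hτ
  have := (abs_le.1 h).1
  linarith

lemma ker_sum {n : ℕ} (τ : ℝ) (ε : Fin n → Bool) : ∑ ε', ker τ ε ε' = 2 ^ n := by
  have h := sum_prod_cube (fun (i : Fin n) b => 1 + τ * (rsign (ε i) * rsign b))
  unfold ker
  refine h.trans ?_
  have : ∀ i : Fin n, ∑ b, (1 + τ * (rsign (ε i) * rsign b)) = 2 := by
    intro i
    simp [rsign]
    ring
  rw [Finset.prod_congr rfl fun i _ => this i]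
  simp

lemma ker_sum' {n : ℕ} (τ : ℝ) (ε' : Fin n → Bool) : ∑ ε, ker τ ε ε' = 2 ^ n := by
  simp_rw [ker_symm τ _ ε']
  exact ker_sum τ ε'

lemma ker_one_ne {n : ℕ} {ε ε' : Fin n → Bool} (h : ε ≠ ε') : ker 1 ε ε' = 0 := by
  obtain ⟨i, hi⟩ := Function.ne_iff.1 h
  refine Finset.prod_eq_zero (Finset.mem_univ i) ?_
  revert hi
  cases ε i <;> cases ε' i <;> simp [rsign]

lemma ker_one_self {n : ℕ} (ε : Fin n → Bool) : ker 1 ε ε = 2 ^ n := by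
  simp only [ker, rsign_mul_self]
  norm_num

lemma ker_expand {n : ℕ} (τ : ℝ) (ε ε' : Fin n → Bool) :
    ker τ ε ε' = ∑ S : Finset (Fin n), τ ^ S.card * (wal S ε * wal S ε') := by
  rw [ker, Finset.prod_one_add, Finset.powerset_univ]
  refine Finset.sum_congr rfl fun S _ => ?_
  rw [Finset.prod_mul_distrib, Finset.prod_mul_distrib, Finset.prod_const]
  rfl

variable {X : Type uX} [AddCommGroup X] [Module ℝ X]

/-- The noise operator. -/
noncomputable def noise {n : ℕ} (τ : ℝ) (Φ : (Fin n → Bool) → X) (ε : Fin n → Bool) : X :=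
  ((2:ℝ) ^ n)⁻¹ • ∑ ε', ker τ ε ε' • Φ ε'

/-- Walsh coefficients. -/
noncomputable def hat {n : ℕ} (Φ : (Fin n → Bool) → X) (S : Finset (Fin n)) : X :=
  ((2:ℝ) ^ n)⁻¹ • ∑ ε, wal S ε • Φ ε

lemma noise_expand {n : ℕ} (τ : ℝ) (Φ : (Fin n → Bool) → X) (ε : Fin n → Bool) :
    noise τ Φ ε = ∑ S : Finset (Fin n), wal S ε • (τ ^ S.card • hat Φ S) := by
  simp only [noise, hat, ker_expand, Finset.sum_smul, Finset.smul_sum, smul_smul]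
  rw [Finset.sum_comm]
  refine Finset.sum_congr rfl fun S _ => Finset.sum_congr rfl fun ε' _ => ?_
  congr 1
  ring

lemma noise_one {n : ℕ} (Φ : (Fin n → Bool) → X) (ε : Fin n → Bool) : noise 1 Φ ε = Φ ε := by
  rw [noise, Finset.sum_eq_single ε]
  · rw [ker_one_self, smul_smul, inv_mul_cancel₀ (by positivity), one_smul]
  · intro ε' _ h
    rw [ker_one_ne h.symm, zero_smul]
  · simp

lemma inversion {n : ℕ} (Φ : (Fin n → Bool) → X) (ε : Fin n → Bool) :
    Φ ε = ∑ S : Finset (Fin n), wal S ε • hat Φ S := by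
  have := noise_expand 1 Φ ε
  simpa [noise_one] using this

lemma parseval {n : ℕ} (B : X →ₗ[ℝ] X →ₗ[ℝ] ℝ) (a : Finset (Fin n) → X) :
    (2 ^ n)⁻¹ * ∑ ε : Fin n → Bool, B (∑ S, wal S ε • a S) (∑ S, wal S ε • a S) =
      ∑ S, B (a S) (a S) := by
  have h1 : ∀ ε : Fin n → Bool, B (∑ S, wal S ε • a S) (∑ S, wal S ε • a S) =
      ∑ S, ∑ T, (wal S ε * wal T ε) * B (a S) (a T) := by
    intro ε
    simp only [map_sum, LinearMap.sum_apply, map_smul, LinearMap.smul_apply, smul_eq_mul]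
    rw [Finset.sum_comm]
    refine Finset.sum_congr rfl fun S _ => ?_
    rw [Finset.mul_sum]
    refine Finset.sum_congr rfl fun T _ => ?_
    ring
  simp_rw [h1]
  rw [Finset.sum_comm]
  simp_rw [Finset.sum_comm (s := (Finset.univ : Finset (Fin n → Bool)))]
  simp only [← Finset.sum_mul, wal_orth, ite_mul, zero_mul, Finset.sum_ite_eq,
    Finset.mem_univ, if_true, ← Finset.mul_sum]
  rw [inv_mul_cancel_left₀ (by positivity)]

lemma noise_nc (Q : QuasiNormOn X) {n : ℕ} {τ : ℝ} (hτ : |τ| ≤ 1) (Φ : (Fin n → Bool) → X) :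
    (2 ^ n)⁻¹ * ∑ ε, nc Q (noise τ Φ ε) ^ 2 ≤ (2 ^ n)⁻¹ * ∑ ε, nc Q (Φ ε) ^ 2 := by
  have h2 : (0:ℝ) < 2 ^ n := by positivity
  have h1 : ∀ ε, nc Q (noise τ Φ ε) ^ 2 ≤ (2 ^ n)⁻¹ * ∑ ε', ker τ ε ε' * nc Q (Φ ε') ^ 2 := by
    intro ε
    have h3 : nc Q (noise τ Φ ε) ≤ (2 ^ n)⁻¹ * ∑ ε', ker τ ε ε' * nc Q (Φ ε') := by
      rw [noise, map_smul_eq_mul, Real.norm_eq_abs, abs_of_pos (by positivity)]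
      gcongr
      refine (Finset.le_sum_of_subadditive (nc Q) (map_zero _).le (map_add_le_add _) _ _).trans (le_of_eq (Finset.sum_congr rfl fun ε' _ => ?_))
      rw [map_smul_eq_mul, Real.norm_eq_abs, abs_of_nonneg (ker_nonneg hτ _ _)]
    have h4 : (∑ ε', ker τ ε ε' * nc Q (Φ ε')) ^ 2 ≤
        (∑ ε', ker τ ε ε') * ∑ ε', ker τ ε ε' * nc Q (Φ ε') ^ 2 := by
      refine Finset.sum_sq_le_sum_mul_sum_of_sq_le_mul _ (fun i _ => ker_nonneg hτ _ _)
        (fun i _ => mul_nonneg (ker_nonneg hτ _ _) (sq_nonneg _)) fun i _ => le_of_eq ?_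
      ring
    rw [ker_sum] at h4
    calc _ ≤ ((2 ^ n)⁻¹ * ∑ ε', ker τ ε ε' * nc Q (Φ ε')) ^ 2 := by
          gcongr
      _ = ((2 ^ n)⁻¹) ^ 2 * (∑ ε', ker τ ε ε' * nc Q (Φ ε')) ^ 2 := by ring
      _ ≤ ((2 ^ n)⁻¹) ^ 2 * (2 ^ n * ∑ ε', ker τ ε ε' * nc Q (Φ ε') ^ 2) := by gcongr
      _ = _ := by field_simp
  gcongr ?_ * ?_
  calc ∑ ε, nc Q (noise τ Φ ε) ^ 2
      ≤ ∑ ε, (2 ^ n)⁻¹ * ∑ ε', ker τ ε ε' * nc Q (Φ ε') ^ 2 := Finset.sum_le_sum fun ε _ => h1 ε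
    _ = ∑ ε', nc Q (Φ ε') ^ 2 := by
      rw [← Finset.mul_sum, Finset.sum_comm]
      simp only [← Finset.sum_mul, ker_sum']
      rw [← Finset.mul_sum, inv_mul_cancel_left₀ h2.ne']

/-- The smoothed odd part. -/
noncomputable def smo {n : ℕ} (τ : ℝ) (Φ : (Fin n → Bool) → X) (ε : Fin n → Bool) : X :=
  (2 * τ)⁻¹ • (noise τ Φ ε - noise (-τ) Φ ε)

lemma smo_nc (Q : QuasiNormOn X) {n : ℕ} {τ : ℝ} (h0 : 0 < τ) (h1 : τ ≤ 1)
    (Φ : (Fin n → Bool) → X) :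
    (2 ^ n)⁻¹ * ∑ ε, nc Q (smo τ Φ ε) ^ 2 ≤ (τ ^ 2)⁻¹ * ((2 ^ n)⁻¹ * ∑ ε, nc Q (Φ ε) ^ 2) := by
  have ha := noise_nc Q (τ := τ) (by rw [abs_of_pos h0]; exact h1) Φ
  have hb := noise_nc Q (τ := -τ) (by rw [abs_neg, abs_of_pos h0]; exact h1) Φ
  set A := (2 ^ n)⁻¹ * ∑ ε, nc Q (Φ ε) ^ 2
  have h2 : ∀ ε, nc Q (smo τ Φ ε) ^ 2 ≤
      (2 * τ ^ 2)⁻¹ * (nc Q (noise τ Φ ε) ^ 2 + nc Q (noise (-τ) Φ ε) ^ 2) := by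
    intro ε
    rw [smo, map_smul_eq_mul, Real.norm_eq_abs, mul_pow, sq_abs]
    have h3 := map_sub_le_add (nc Q) (noise τ Φ ε) (noise (-τ) Φ ε)
    have h4 : nc Q (noise τ Φ ε - noise (-τ) Φ ε) ^ 2 ≤
        2 * (nc Q (noise τ Φ ε) ^ 2 + nc Q (noise (-τ) Φ ε) ^ 2) := by
      calc _ ≤ (nc Q (noise τ Φ ε) + nc Q (noise (-τ) Φ ε)) ^ 2 := by
            gcongr
        _ ≤ _ := add_sq_le
    calc _ ≤ ((2 * τ)⁻¹) ^ 2 * (2 * (nc Q (noise τ Φ ε) ^ 2 + nc Q (noise (-τ) Φ ε) ^ 2)) := by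
          gcongr
      _ = _ := by
          field_simp
  calc _ ≤ (2 ^ n)⁻¹ * ∑ ε, (2 * τ ^ 2)⁻¹ *
        (nc Q (noise τ Φ ε) ^ 2 + nc Q (noise (-τ) Φ ε) ^ 2) := by
        gcongr with ε
        exact h2 ε
    _ = (2 * τ ^ 2)⁻¹ * ((2 ^ n)⁻¹ * ∑ ε, nc Q (noise τ Φ ε) ^ 2 +
        (2 ^ n)⁻¹ * ∑ ε, nc Q (noise (-τ) Φ ε) ^ 2) := by
        rw [← Finset.mul_sum, Finset.sum_add_distrib]
        ring
    _ ≤ (2 * τ ^ 2)⁻¹ * (A + A) := by gcongr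
    _ = _ := by
        field_simp
        ring

/-- Multiplier of the error term. -/
noncomputable def mult (τ : ℝ) (k : ℕ) : ℝ :=
  (if k = 1 then 1 else 0) - (2 * τ)⁻¹ * (τ ^ k - (-τ) ^ k)

lemma mult_sq {τ : ℝ} (h0 : 0 < τ) (h1 : τ ≤ 1) (k : ℕ) : mult τ k ^ 2 ≤ τ ^ 4 := by
  rcases Nat.even_or_odd k with hk | hk
  · have : k ≠ 1 := by
      rintro rfl
      exact absurd hk (by decide)
    rw [mult, hk.neg_pow, if_neg this]
    have : 0 < τ ^ 4 := by positivity
    simpa using this.le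
  · rw [mult, hk.neg_pow]
    by_cases hk1 : k = 1
    · subst hk1
      simp only [if_true]
      have : 1 - (2 * τ)⁻¹ * (τ ^ 1 - -τ ^ 1) = 0 := by
        field_simp
        ring
      rw [this]
      have h4 : 0 < τ ^ 4 := by positivity
      simpa using h4.le
    · obtain ⟨m, rfl⟩ := hk
      have hm : 1 ≤ m := by omega
      rw [if_neg hk1]
      have h3 : 0 - (2 * τ)⁻¹ * (τ ^ (2 * m + 1) - -τ ^ (2 * m + 1)) = - τ ^ (2 * m) := by
        rw [pow_succ]
        field_simp
        ring
      rw [h3, neg_sq, ← pow_mul]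
      exact pow_le_pow_of_le_one h0.le h1 (by omega)

lemma err_expand {n : ℕ} (τ : ℝ) (Φ : (Fin n → Bool) → X) (ε : Fin n → Bool) :
    ∑ i, rsign (ε i) • radc X n Φ i - smo τ Φ ε =
      ∑ S : Finset (Fin n), wal S ε • (mult τ S.card • hat Φ S) := by
  have h1 : ∑ i, rsign (ε i) • radc X n Φ i = ∑ S : Finset (Fin n),
      if S.card = 1 then wal S ε • hat Φ S else 0 := by
    rw [← Finset.sum_filter]
    have : (Finset.univ.filter fun S : Finset (Fin n) => S.card = 1) =
        Finset.powersetCard 1 Finset.univ := by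
      ext S
      simp [Finset.mem_powersetCard]
    rw [this, Finset.powersetCard_one, Finset.sum_map]
    refine Finset.sum_congr rfl fun i _ => ?_
    simp [radc_apply, hat, wal_singleton]
  rw [h1, smo, noise_expand, noise_expand, ← Finset.sum_sub_distrib, Finset.smul_sum,
    ← Finset.sum_sub_distrib]
  refine Finset.sum_congr rfl fun S _ => ?_
  rw [mult]
  split_ifs
  · module
  · module

lemma err_bound {n : ℕ} {τ : ℝ} (h0 : 0 < τ) (h1 : τ ≤ 1) (B : X →ₗ[ℝ] X →ₗ[ℝ] ℝ)
    (hB : ∀ x, 0 ≤ B x x) (Φ : (Fin n → Bool) → X) :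
    (2 ^ n)⁻¹ * ∑ ε : Fin n → Bool, B (∑ i, rsign (ε i) • radc X n Φ i - smo τ Φ ε)
      (∑ i, rsign (ε i) • radc X n Φ i - smo τ Φ ε) ≤
      τ ^ 4 * ((2 ^ n)⁻¹ * ∑ ε, B (Φ ε) (Φ ε)) := by
  simp_rw [err_expand]
  rw [parseval]
  have h2 : (2 ^ n)⁻¹ * ∑ ε, B (Φ ε) (Φ ε) = ∑ S, B (hat Φ S) (hat Φ S) := by
    rw [← parseval]
    simp_rw [← inversion]
  rw [h2, Finset.mul_sum]
  refine Finset.sum_le_sum fun S _ => ?_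
  simp only [map_smul, LinearMap.smul_apply, smul_eq_mul]
  rw [← mul_assoc, ← sq]
  exact mul_le_mul_of_nonneg_right (mult_sq h0 h1 _) (hB _)

end Noise
end AGT

namespace AGT

section Apriori

variable {X : Type uX} {Y : Type uY} [AddCommGroup X] [Module ℝ X] [AddCommGroup Y] [Module ℝ Y]

lemma tri_sq (Q : QuasiNormOn Y) (x y : Y) :
    Q.q (x + y) ^ 2 ≤ 2 * Q.k ^ 2 * (Q.q x ^ 2 + Q.q y ^ 2) := by
  have hk := Q.one_le_k
  have h := Q.nonneg (x + y)
  calc _ ≤ (Q.k * (Q.q x + Q.q y)) ^ 2 := by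
        gcongr
        exact Q.tri x y
    _ = Q.k ^ 2 * (Q.q x + Q.q y) ^ 2 := by ring
    _ ≤ Q.k ^ 2 * (2 * (Q.q x ^ 2 + Q.q y ^ 2)) := by
        gcongr
        exact add_sq_le
    _ = _ := by ring

lemma cotypeSq_of (Q : QuasiNormOn Y) (h : HasCotype Q.q 2) : ∃ C, 0 < C ∧ CotypeSq Q C := by
  obtain ⟨C, hC, h⟩ := h
  refine ⟨C ^ 2, by positivity, fun n y => ?_⟩
  have := h n y
  simp only [radAvg, Real.rpow_two, ← Real.sqrt_eq_rpow] at this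
  have h2 := Real.sqrt_le_iff.1 this
  refine h2.2.trans (le_of_eq ?_)
  rw [mul_pow, Real.sq_sqrt (by positivity)]

lemma typeBd {QX : QuasiNormOn X} {QY : QuasiNormOn Y} {C1 : ℝ}
    (hC1 : ∀ (n : ℕ) (x : Fin n → X), ∃ Φ : (Fin n → Bool) → X, radc X n Φ = x ∧
      (2 ^ n)⁻¹ * ∑ ε, nc QX (Φ ε) ^ 2 ≤ C1 * ∑ i, QX.q (x i) ^ 2)
    {u : X →ₗ[ℝ] Y} {c U b τ : ℝ} (hc0 : 0 ≤ c) (hU : 0 ≤ U)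
    (hu : ∀ x, QY.q (u x) ≤ U * QX.q x) (hH : HilbBd QX QY u c) {N : ℕ} (hN : 0 < N)
    (h0 : 0 < τ) (h1 : τ ≤ 1) (hb : b = QY.k * (QY.k ^ N * U + c / √N)) :
    TypeBd QX QY u (2 * QY.k ^ 2 * C1 * (b ^ 2 * (τ ^ 2)⁻¹ + c ^ 2 * τ ^ 4)) := by
  obtain ⟨B, hs, hB1, hB2⟩ := hH
  have hB0 : ∀ x, 0 ≤ B x x := fun x => (sq_nonneg _).trans (hB1 x)
  have hk := QY.one_le_k
  intro n x
  obtain ⟨Φ, hΦ, hA⟩ := hC1 n x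
  set A := (2 ^ n)⁻¹ * ∑ ε, nc QX (Φ ε) ^ 2 with hAdef
  set R := ∑ i, QX.q (x i) ^ 2
  have hpt : ∀ ε : Fin n → Bool, QY.q (∑ i, rsign (ε i) • u (x i)) ^ 2 ≤
      2 * QY.k ^ 2 * (b ^ 2 * nc QX (smo τ Φ ε) ^ 2 +
        B (∑ i, rsign (ε i) • radc X n Φ i - smo τ Φ ε)
          (∑ i, rsign (ε i) • radc X n Φ i - smo τ Φ ε)) := by
    intro ε
    have e1 : ∑ i, rsign (ε i) • u (x i) =
        u (smo τ Φ ε) + u (∑ i, rsign (ε i) • radc X n Φ i - smo τ Φ ε) := by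
      rw [hΦ, ← map_add, add_sub_cancel, map_sum]
      simp
    rw [e1]
    refine (tri_sq QY _ _).trans ?_
    have e2 := nc_bound B hs hB1 hc0 hU hB2 hu N hN (smo τ Φ ε)
    rw [← hb] at e2
    have e3 := pow_le_pow_left₀ (QY.nonneg _) e2 2
    rw [mul_pow] at e3
    have e4 := hB1 (∑ i, rsign (ε i) • radc X n Φ i - smo τ Φ ε)
    gcongr
  have hE := err_bound h0 h1 B hB0 Φ
  have hS := smo_nc QX h0 h1 Φ
  have hBA : (2 ^ n)⁻¹ * ∑ ε, B (Φ ε) (Φ ε) ≤ c ^ 2 * A := by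
    rw [hAdef, mul_left_comm]
    gcongr
    rw [Finset.mul_sum]
    exact Finset.sum_le_sum fun ε _ => B_le_nc B hs hB0 hc0 hB2 _
  rw [← hAdef] at hS
  calc _ ≤ (2 ^ n)⁻¹ * ∑ ε : Fin n → Bool, 2 * QY.k ^ 2 * (b ^ 2 * nc QX (smo τ Φ ε) ^ 2 +
        B (∑ i, rsign (ε i) • radc X n Φ i - smo τ Φ ε)
          (∑ i, rsign (ε i) • radc X n Φ i - smo τ Φ ε)) := by
        gcongr with ε
        exact hpt ε
    _ = 2 * QY.k ^ 2 * (b ^ 2 * ((2 ^ n)⁻¹ * ∑ ε, nc QX (smo τ Φ ε) ^ 2) +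
        (2 ^ n)⁻¹ * ∑ ε : Fin n → Bool, B (∑ i, rsign (ε i) • radc X n Φ i - smo τ Φ ε)
          (∑ i, rsign (ε i) • radc X n Φ i - smo τ Φ ε)) := by
        rw [← Finset.mul_sum, Finset.sum_add_distrib, ← Finset.mul_sum]
        ring
    _ ≤ 2 * QY.k ^ 2 * (b ^ 2 * ((τ ^ 2)⁻¹ * A) + τ ^ 4 * (c ^ 2 * A)) := by
        have hE2 := hE.trans (mul_le_mul_of_nonneg_left hBA (by positivity : 0 ≤ τ ^ 4))
        refine mul_le_mul_of_nonneg_left (add_le_add ?_ hE2) (by positivity)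
        exact mul_le_mul_of_nonneg_left hS (by positivity)
    _ = 2 * QY.k ^ 2 * (b ^ 2 * (τ ^ 2)⁻¹ + c ^ 2 * τ ^ 4) * A := by ring
    _ ≤ 2 * QY.k ^ 2 * (b ^ 2 * (τ ^ 2)⁻¹ + c ^ 2 * τ ^ 4) * (C1 * R) := by gcongr
    _ = _ := by ring

lemma apriori_step (QX : QuasiNormOn X) (QY : QuasiNormOn Y)
    (hdual : DualHasCotype2 QX.q) (hcotY : HasCotype QY.q 2) :
    ∃ K : ℝ, 0 ≤ K ∧ ∀ (u : X →ₗ[ℝ] Y) (U c : ℝ), 0 ≤ U → 0 ≤ c →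
      (∀ x, QY.q (u x) ≤ U * QX.q x) → HilbBd QX QY u c → HilbBd QX QY u (K * U + c / 2) := by
  obtain ⟨C1, hC1, hdual⟩ := duality QX hdual
  obtain ⟨C, hC, hcot⟩ := cotypeSq_of QY hcotY
  have hk := QY.one_le_k
  have hk0 : 0 < QY.k := by linarith
  set k := QY.k with hkdef
  set M := C * (k ^ 2 * (2 * k ^ 2 * C1)) with hM
  have hM0 : 0 < M := by positivity
  obtain ⟨τ, h0, h1, hτ⟩ : ∃ τ : ℝ, 0 < τ ∧ τ ≤ 1 ∧ M * τ ^ 4 ≤ 1 / 8 := by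
    refine ⟨(8 * M + 1)⁻¹, by positivity, inv_le_one_of_one_le₀ (by linarith), ?_⟩
    have h1 : (8 * M + 1)⁻¹ ≤ 1 := inv_le_one_of_one_le₀ (by linarith)
    have h2 : ((8 * M + 1)⁻¹) ^ 4 ≤ (8 * M + 1)⁻¹ := by
      simpa using pow_le_pow_of_le_one (by positivity) h1 (show 1 ≤ 4 by norm_num)
    calc _ ≤ M * (8 * M + 1)⁻¹ := by gcongr
      _ ≤ 1 / 8 := by
        rw [← div_eq_mul_inv, div_le_div_iff₀ (by positivity) (by norm_num)]
        linarith
  obtain ⟨N, hN⟩ := exists_nat_gt (16 * (M * k ^ 2 * (τ ^ 2)⁻¹))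
  have hN0 : (0:ℝ) < N := lt_trans (by positivity) hN
  have hN1 : 0 < N := by exact_mod_cast hN0
  set K1 := M * (2 * k ^ 2 * (k ^ N) ^ 2) * (τ ^ 2)⁻¹ with hK1
  have hK10 : 0 ≤ K1 := by positivity
  refine ⟨√K1, Real.sqrt_nonneg _, fun u U c hU hc hu hH => ?_⟩
  refine Crit.hilbBd (kwapien hC.le hcot
    (typeBd hdual hc hU hu hH hN1 h0 h1 rfl) ?_)
  rw [← hkdef]
  have hb : (k * (k ^ N * U + c / √N)) ^ 2 ≤ 2 * k ^ 2 * ((k ^ N) ^ 2 * U ^ 2 + c ^ 2 / N) := by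
    calc _ = k ^ 2 * (k ^ N * U + c / √N) ^ 2 := by ring
      _ ≤ k ^ 2 * (2 * ((k ^ N * U) ^ 2 + (c / √N) ^ 2)) := by
        gcongr
        exact add_sq_le
      _ = _ := by
        rw [div_pow, Real.sq_sqrt hN0.le]
        ring
  have h5 : M * (2 * k ^ 2) * (τ ^ 2)⁻¹ * (c ^ 2 / N) ≤ c ^ 2 / 8 := by
    rw [mul_div_assoc', div_le_div_iff₀ hN0 (by norm_num)]
    have := mul_le_mul_of_nonneg_left hN.le (sq_nonneg c)
    linarith
  have h6 : M * τ ^ 4 * c ^ 2 ≤ 1 / 8 * c ^ 2 := by gcongr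
  calc C * (k ^ 2 * (2 * k ^ 2 * C1 * ((k * (k ^ N * U + c / √N)) ^ 2 * (τ ^ 2)⁻¹ + c ^ 2 * τ ^ 4)))
      = M * ((k * (k ^ N * U + c / √N)) ^ 2 * (τ ^ 2)⁻¹ + c ^ 2 * τ ^ 4) := by
        rw [hM]
        ring
    _ ≤ M * ((2 * k ^ 2 * ((k ^ N) ^ 2 * U ^ 2 + c ^ 2 / N)) * (τ ^ 2)⁻¹ + c ^ 2 * τ ^ 4) := by
        gcongr
    _ = K1 * U ^ 2 + M * (2 * k ^ 2) * (τ ^ 2)⁻¹ * (c ^ 2 / N) + M * τ ^ 4 * c ^ 2 := by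
        rw [hK1]
        ring
    _ ≤ K1 * U ^ 2 + c ^ 2 / 4 := by linarith
    _ ≤ (√K1 * U + c / 2) ^ 2 := by
        have h7 : (√K1 * U + c / 2) ^ 2 = √K1 ^ 2 * U ^ 2 + √K1 * U * c + c ^ 2 / 4 := by ring
        rw [h7, Real.sq_sqrt hK10]
        have : 0 ≤ √K1 * U * c := by positivity
        linarith

lemma HilbBd.mono {QX : QuasiNormOn X} {QY : QuasiNormOn Y} {u : X →ₗ[ℝ] Y} {c d : ℝ}
    (h : HilbBd QX QY u c) (h0 : 0 ≤ c) (hd : c ≤ d) : HilbBd QX QY u d := by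
  obtain ⟨B, h1, h2, h3⟩ := h
  refine ⟨B, h1, h2, fun x => (h3 x).trans ?_⟩
  gcongr

lemma apriori (QX : QuasiNormOn X) (QY : QuasiNormOn Y)
    (hdual : DualHasCotype2 QX.q) (hcotY : HasCotype QY.q 2) :
    ∃ K : ℝ, 0 ≤ K ∧ ∀ (u : X →ₗ[ℝ] Y) (U c : ℝ), 0 ≤ U →
      (∀ x, QY.q (u x) ≤ U * QX.q x) → HilbBd QX QY u c →
      ∀ δ > 0, HilbBd QX QY u (K * U + δ) := by
  obtain ⟨K, hK, h⟩ := apriori_step QX QY hdual hcotY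
  refine ⟨2 * K, by positivity, fun u U c hU hu hH δ hδ => ?_⟩
  have hH' : HilbBd QX QY u |c| := by
    obtain ⟨B, h1, h2, h3⟩ := hH
    exact ⟨B, h1, h2, fun x => by rw [sq_abs]; exact h3 x⟩
  have hit : ∀ m : ℕ, HilbBd QX QY u (2 * K * U + |c| / 2 ^ m) := by
    intro m
    induction m with
    | zero => exact hH'.mono (abs_nonneg c) (by
        have : 0 ≤ 2 * K * U := by positivity
        simpa using this)
    | succ m ih =>
      have := h u U _ hU (by positivity) hu ih
      refine this.mono (by positivity) (le_of_eq ?_)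
      rw [pow_succ]
      field_simp
      ring
  obtain ⟨m, hm⟩ := exists_nat_gt (|c| / δ)
  refine (hit m).mono (by positivity) ?_
  have h2 : (m:ℝ) < 2 ^ m := by exact_mod_cast Nat.lt_two_pow_self
  have : |c| / 2 ^ m ≤ δ := by
    rw [div_le_iff₀ (by positivity)]
    rw [div_lt_iff₀ hδ] at hm
    nlinarith
  linarith

end Apriori
end AGT

namespace AGT

section Class

variable {X : Type uX} {Y : Type uY} [AddCommGroup X] [Module ℝ X] [AddCommGroup Y] [Module ℝ Y]
variable {QX : QuasiNormOn X} {QY : QuasiNormOn Y}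

lemma HilbBd.add {u w : X →ₗ[ℝ] Y} {c d : ℝ} (hu : HilbBd QX QY u c) (hw : HilbBd QX QY w d) :
    HilbBd QX QY (u + w) √(2 * QY.k ^ 2 * (c ^ 2 + d ^ 2)) := by
  obtain ⟨B, h1, h2, h3⟩ := hu
  obtain ⟨B', h1', h2', h3'⟩ := hw
  refine ⟨(2 * QY.k ^ 2) • (B + B'), fun x y => ?_, fun x => ?_, fun x => ?_⟩
  · simp [h1 x y, h1' x y]
  · simp only [LinearMap.add_apply, LinearMap.smul_apply, smul_eq_mul]
    refine (tri_sq QY _ _).trans ?_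
    gcongr
    · exact h2 x
    · exact h2' x
  · simp only [LinearMap.add_apply, LinearMap.smul_apply, smul_eq_mul]
    rw [Real.sq_sqrt (by positivity), mul_assoc (2 * QY.k ^ 2), add_mul]
    gcongr
    · exact h3 x
    · exact h3' x

lemma HilbBd.smul {u : X →ₗ[ℝ] Y} {c : ℝ} (hu : HilbBd QX QY u c) (a : ℝ) :
    HilbBd QX QY (a • u) (a * c) := by
  obtain ⟨B, h1, h2, h3⟩ := hu
  refine ⟨(a ^ 2) • B, fun x y => ?_, fun x => ?_, fun x => ?_⟩
  · simp [h1 x y]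
  · simp only [LinearMap.smul_apply, smul_eq_mul, QY.smul_eq, mul_pow, sq_abs]
    gcongr
    exact h2 x
  · simp only [LinearMap.smul_apply, smul_eq_mul, mul_pow, mul_assoc]
    gcongr
    exact h3 x

lemma lower_bound (Q : QuasiNormOn Y) {n : ℕ} (v : Fin n → Y) (hv : LinearIndependent ℝ v) :
    ∃ m > 0, ∀ a : EuclideanSpace ℝ (Fin n), m * ‖a‖ ≤ Q.q (∑ i, a i • v i) := by
  obtain ⟨F, hF, h1, h2⟩ := exists_smooth Q v
  have hk := Q.one_le_k
  have hpos : ∀ a : EuclideanSpace ℝ (Fin n), a ≠ 0 → 0 < Q.q (∑ i, a i • v i) := by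
    intro a ha
    refine lt_of_le_of_ne (Q.nonneg _) fun h => ha ?_
    have h3 := (Q.eq_zero_iff _).1 h.symm
    ext i
    exact Fintype.linearIndependent_iff.1 hv (fun i => a i) h3 i
  obtain ⟨m, hm, hm2⟩ : ∃ m > 0, ∀ a ∈ Metric.sphere (0 : EuclideanSpace ℝ (Fin n)) 1, m ≤ F a := by
    rcases (Metric.sphere (0 : EuclideanSpace ℝ (Fin n)) 1).eq_empty_or_nonempty with he | hne
    · exact ⟨1, one_pos, by simp [he]⟩
    · obtain ⟨a, ha, hmin⟩ := (isCompact_sphere (0 : EuclideanSpace ℝ (Fin n)) 1).exists_isMinOn hne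
        hF.continuousOn
      refine ⟨F a, lt_of_lt_of_le (hpos a ?_) (h1 a), fun b hb => hmin hb⟩
      rintro rfl
      simp at ha
  refine ⟨m / Q.k, by positivity, fun a => ?_⟩
  rcases eq_or_ne a 0 with rfl | ha
  · simp [q_zero]
  have hna : 0 < ‖a‖ := norm_pos_iff.2 ha
  have h3 := (hm2 (‖a‖⁻¹ • a) (by simp [norm_smul, hna.ne'])).trans (h2 _)
  have h4 : ∑ i, (‖a‖⁻¹ • a) i • v i = ‖a‖⁻¹ • ∑ i, a i • v i := by
    simp [Finset.smul_sum, smul_smul]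
  rw [h4, Q.smul_eq, abs_inv, abs_norm] at h3
  rw [div_mul_eq_mul_div, div_le_iff₀ (by positivity)]
  have h5 := mul_le_mul_of_nonneg_right h3 hna.le
  calc _ ≤ _ := h5
    _ = _ := by field_simp

lemma finite_rank {u : X →ₗ[ℝ] Y} (hu : IsBddOp QX.q QY.q u)
    (hfin : Module.Finite ℝ (LinearMap.range u)) : ∃ c, HilbBd QX QY u c := by
  obtain ⟨M, hM, hu⟩ := hu
  let b := Module.finBasis ℝ (LinearMap.range u)
  let v : Fin _ → Y := fun i => (b i : Y)
  have hv : LinearIndependent ℝ v :=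
    b.linearIndependent.map' (LinearMap.range u).subtype (Submodule.ker_subtype _)
  obtain ⟨m, hm, hlow⟩ := lower_bound QY v hv
  have hk := QY.one_le_k
  let φ : Fin (Module.finrank ℝ (LinearMap.range u)) → (X →ₗ[ℝ] ℝ) :=
    fun i => b.coord i ∘ₗ u.rangeRestrict
  have hux : ∀ x, u x = ∑ i, φ i x • v i := by
    intro x
    have := congrArg Subtype.val (b.sum_repr (u.rangeRestrict x))
    rw [Submodule.coe_sum] at this
    exact this.symm
  let A : X → EuclideanSpace ℝ (Fin (Module.finrank ℝ (LinearMap.range u))) :=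
    fun x => WithLp.toLp 2 (fun i => φ i x)
  have hA : ∀ x, ‖A x‖ ^ 2 = ∑ i, φ i x * φ i x := by
    intro x
    rw [EuclideanSpace.norm_sq_eq]
    refine Finset.sum_congr rfl fun i _ => ?_
    simp [A, sq]
  set D := QY.k ^ (Module.finrank ℝ (LinearMap.range u)) * ∑ i, QY.q (v i) with hD
  have hD0 : 0 ≤ D := mul_nonneg (by positivity) (Finset.sum_nonneg fun i _ => QY.nonneg _)
  have hup : ∀ x, QY.q (u x) ≤ D * ‖A x‖ := by
    intro x
    rw [hux x]
    have h1 := q_sum_le QY Finset.univ (fun i => φ i x • v i)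
    rw [Finset.card_univ, Fintype.card_fin] at h1
    refine h1.trans ?_
    rw [hD, mul_assoc, Finset.sum_mul]
    gcongr with i
    rw [QY.smul_eq, mul_comm]
    have h2 := PiLp.norm_apply_le (A x) i
    have h3 := QY.nonneg (v i)
    gcongr
    exact h2
  have hlo : ∀ x, ‖A x‖ ≤ m⁻¹ * (M * QX.q x) := by
    intro x
    rw [le_inv_mul_iff₀ hm]
    refine (hlow (A x)).trans ?_
    have : ∑ i, (A x) i • v i = u x := (hux x).symm
    rw [this]
    exact hu x
  let B : X →ₗ[ℝ] X →ₗ[ℝ] ℝ := D ^ 2 • ∑ i, (LinearMap.mul ℝ ℝ).compl₁₂ (φ i) (φ i)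
  have hB : ∀ x y, B x y = D ^ 2 * ∑ i, φ i x * φ i y := by
    intro x y
    simp [B, LinearMap.sum_apply]
  refine ⟨D * (m⁻¹ * M), B, fun x y => ?_, fun x => ?_, fun x => ?_⟩
  · rw [hB, hB]
    simp_rw [mul_comm (φ _ x)]
  · rw [hB, ← hA, ← mul_pow]
    exact pow_le_pow_left₀ (QY.nonneg _) (hup x) 2
  · rw [hB, ← hA, ← mul_pow, ← mul_pow]
    refine pow_le_pow_left₀ (by positivity) ?_ 2
    calc _ ≤ D * (m⁻¹ * (M * QX.q x)) := by
          gcongr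
          exact hlo x
      _ = _ := by ring

lemma net_closed {K : ℝ} (hK : 0 ≤ K) (hap : ∀ (u : X →ₗ[ℝ] Y) (U c : ℝ), 0 ≤ U →
      (∀ x, QY.q (u x) ≤ U * QX.q x) → HilbBd QX QY u c →
      ∀ δ > 0, HilbBd QX QY u (K * U + δ)) :
    NetClosed QX.q QY.q {w | IsBddOp QX.q QY.q w ∧ ∃ c, HilbBd QX QY w c} := by
  intro l hl hS ⟨U₀, hU₀⟩ u hlim
  have hk := QY.one_le_k
  set U := max U₀ 0 with hU
  have hU0 : 0 ≤ U := le_max_right _ _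
  have hbd : ∀ᶠ w in l, ∀ x, QY.q (w x) ≤ U * QX.q x := by
    filter_upwards [hU₀] with w hw x
    refine (hw x).trans ?_
    have := QX.nonneg x
    gcongr
    exact le_max_left _ _
  set c := K * U + 1 with hc
  have hcrit : ∀ᶠ w in l, Crit QX QY w c := by
    filter_upwards [hbd, hS] with w hw hw2
    obtain ⟨c', hc'⟩ := hw2.2
    exact (hap w U c' hU0 hw hc' 1 one_pos).crit
  have hsymm : ∀ (w : X →ₗ[ℝ] Y) x, QY.q (u x - w x) = QY.q (w x - u x) := by
    intro w x
    rw [← q_neg, neg_sub]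
  refine ⟨⟨QY.k * U, by positivity, fun x => ?_⟩, √(2 * QY.k ^ 2 * c ^ 2), ?_⟩
  · have ht : Filter.Tendsto (fun w : X →ₗ[ℝ] Y => QY.k * (U * QX.q x + QY.q (w x - u x))) l
        (nhds (QY.k * (U * QX.q x + 0))) := (tendsto_const_nhds.add (hlim x)).const_mul _
    refine (ge_of_tendsto ht ?_).trans (le_of_eq (by ring))
    filter_upwards [hbd] with w hw
    have h1 := QY.tri (w x) (u x - w x)
    rw [add_sub_cancel, hsymm] at h1
    refine h1.trans ?_
    gcongr
    exact hw x
  · refine Crit.hilbBd fun n x y hxy => ?_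
    rw [Real.sq_sqrt (by positivity)]
    have ht : Filter.Tendsto (fun w : X →ₗ[ℝ] Y => 2 * QY.k ^ 2 * (c ^ 2 * ∑ i, QX.q (x i) ^ 2 +
        ∑ i, QY.q (w (y i) - u (y i)) ^ 2)) l
        (nhds (2 * QY.k ^ 2 * (c ^ 2 * ∑ i, QX.q (x i) ^ 2 + ∑ i : Fin n, (0:ℝ) ^ 2))) :=
      (tendsto_const_nhds.add (tendsto_finsetSum _ fun i _ => (hlim (y i)).pow 2)).const_mul _
    refine (ge_of_tendsto ht ?_).trans (le_of_eq (by simp; ring))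
    filter_upwards [hcrit] with w hw
    have h1 := hw n x y hxy
    calc ∑ i, QY.q (u (y i)) ^ 2
        ≤ ∑ i, 2 * QY.k ^ 2 * (QY.q (w (y i)) ^ 2 + QY.q (w (y i) - u (y i)) ^ 2) := by
          refine Finset.sum_le_sum fun i _ => ?_
          have h2 := tri_sq QY (w (y i)) (u (y i) - w (y i))
          rwa [add_sub_cancel, hsymm] at h2
      _ = 2 * QY.k ^ 2 * (∑ i, QY.q (w (y i)) ^ 2 + ∑ i, QY.q (w (y i) - u (y i)) ^ 2) := by
          rw [← Finset.mul_sum, Finset.sum_add_distrib]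
      _ ≤ _ := by gcongr

lemma IsBddOp.add' {u w : X →ₗ[ℝ] Y} (hu : IsBddOp QX.q QY.q u) (hw : IsBddOp QX.q QY.q w) :
    IsBddOp QX.q QY.q (u + w) := by
  obtain ⟨M, hM, hu⟩ := hu
  obtain ⟨M', hM', hw⟩ := hw
  have hk := QY.one_le_k
  refine ⟨QY.k * (M + M'), by positivity, fun x => ?_⟩
  refine (QY.tri _ _).trans ?_
  rw [mul_assoc, add_mul]
  gcongr
  · exact hu x
  · exact hw x

lemma IsBddOp.smul' {u : X →ₗ[ℝ] Y} (hu : IsBddOp QX.q QY.q u) (a : ℝ) :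
    IsBddOp QX.q QY.q (a • u) := by
  obtain ⟨M, hM, hu⟩ := hu
  refine ⟨|a| * M, by positivity, fun x => ?_⟩
  rw [LinearMap.smul_apply, QY.smul_eq, mul_assoc]
  gcongr
  exact hu x

lemma hilbBd_of_strong {K : ℝ} (hK : 0 ≤ K) (hap : ∀ (u : X →ₗ[ℝ] Y) (U c : ℝ), 0 ≤ U →
      (∀ x, QY.q (u x) ≤ U * QX.q x) → HilbBd QX QY u c →
      ∀ δ > 0, HilbBd QX QY u (K * U + δ)) {u : X →ₗ[ℝ] Y}
    (hu : StronglyApproximable QX.q QY.q u) : ∃ c, HilbBd QX QY u c := by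
  have := hu {w | IsBddOp QX.q QY.q w ∧ ∃ c, HilbBd QX QY w c} (fun w hw => hw.1)
    (fun w w' hw hw' => ⟨IsBddOp.add' hw.1 hw'.1, by
      obtain ⟨c, hc⟩ := hw.2
      obtain ⟨d, hd⟩ := hw'.2
      exact ⟨_, hc.add hd⟩⟩)
    (fun a w hw => ⟨IsBddOp.smul' hw.1 a, by
      obtain ⟨c, hc⟩ := hw.2
      exact ⟨_, hc.smul a⟩⟩)
    (fun w hw hfin => ⟨hw, finite_rank hw hfin⟩) (net_closed hK hap)
  exact this.2

end Class
end AGT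

namespace AGT

section Factor

variable {X : Type uX} {Y : Type uY} [AddCommGroup X] [Module ℝ X] [AddCommGroup Y] [Module ℝ Y]

lemma exists_hilbert (B : X →ₗ[ℝ] X →ₗ[ℝ] ℝ) (hs : ∀ x y, B x y = B y x)
    (h0 : ∀ x, 0 ≤ B x x) :
    ∃ (ι : Type uX) (w : X →ₗ[ℝ] lp (fun _ : ι => ℝ) 2), (∀ x, ‖w x‖ ^ 2 = B x x) ∧
      DenseRange w := by
  let core : PreInnerProductSpace.Core ℝ X :=
    { inner := fun x y => B x y
      conj_inner_symm := fun x y => by simpa using hs y x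
      re_inner_nonneg := fun x => by simpa using h0 x
      add_left := fun x y z => by simp
      smul_left := fun x y r => by simp }
  let : SeminormedAddCommGroup X := @InnerProductSpace.Core.toSeminormedAddCommGroup ℝ X _ _ _ core
  let : InnerProductSpace ℝ X := InnerProductSpace.ofCore core
  obtain ⟨s, b, -⟩ := exists_hilbertBasis ℝ (UniformSpace.Completion X)
  refine ⟨s, b.repr.toLinearEquiv.toLinearMap ∘ₗ
    (UniformSpace.Completion.toComplL (𝕜 := ℝ) (E := X)).toLinearMap, fun x => ?_, ?_⟩
  · have h1 : ‖b.repr (x : UniformSpace.Completion X)‖ ^ 2 = B x x := by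
      rw [b.repr.norm_map, UniformSpace.Completion.norm_coe]
      exact (real_inner_self_eq_norm_sq x).symm
    exact h1
  · have h2 : DenseRange (fun x : X => b.repr (x : UniformSpace.Completion X)) :=
      b.repr.surjective.denseRange.comp UniformSpace.Completion.denseRange_coe b.repr.continuous
    exact h2

variable {H : Type*} [NormedAddCommGroup H] [NormedSpace ℝ H]

/-- The graph of the extension. -/
def ExtRel (QY : QuasiNormOn Y) (w : X →ₗ[ℝ] H) (u : X →ₗ[ℝ] Y) (h : H) (y : Y) : Prop :=
  ∃ x : ℕ → X, Filter.Tendsto (fun n => w (x n)) Filter.atTop (nhds h) ∧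
    Filter.Tendsto (fun n => QY.q (u (x n) - y)) Filter.atTop (nhds 0)

lemma extRel_add {QY : QuasiNormOn Y} {w : X →ₗ[ℝ] H} {u : X →ₗ[ℝ] Y} {h h' : H} {y y' : Y}
    (H1 : ExtRel QY w u h y) (H2 : ExtRel QY w u h' y') : ExtRel QY w u (h + h') (y + y') := by
  obtain ⟨x, hx, hx2⟩ := H1
  obtain ⟨x', hx', hx2'⟩ := H2
  refine ⟨fun n => x n + x' n, by simpa using hx.add hx', ?_⟩
  have ht := (hx2.add hx2').const_mul QY.k
  rw [add_zero, mul_zero] at ht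
  refine squeeze_zero (fun n => QY.nonneg _) (fun n => ?_) ht
  rw [map_add, add_sub_add_comm]
  exact QY.tri _ _

lemma extRel_smul {QY : QuasiNormOn Y} {w : X →ₗ[ℝ] H} {u : X →ₗ[ℝ] Y} {h : H} {y : Y}
    (a : ℝ) (H1 : ExtRel QY w u h y) : ExtRel QY w u (a • h) (a • y) := by
  obtain ⟨x, hx, hx2⟩ := H1
  refine ⟨fun n => a • x n, by simpa using hx.const_smul a, ?_⟩
  have ht := hx2.const_mul |a|
  rw [mul_zero] at ht
  simpa [← smul_sub, QY.smul_eq] using ht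

lemma extRel_bound {QY : QuasiNormOn Y} {w : X →ₗ[ℝ] H} {u : X →ₗ[ℝ] Y}
    (hu : ∀ x, QY.q (u x) ≤ ‖w x‖) {h : H} {y : Y}
    (H1 : ExtRel QY w u h y) : QY.q y ≤ QY.k * ‖h‖ := by
  obtain ⟨x, hx, hx2⟩ := H1
  have hk := QY.one_le_k
  have ht := (hx.norm.add hx2).const_mul QY.k
  rw [add_zero] at ht
  refine ge_of_tendsto' ht fun n => ?_
  have h1 := QY.tri (u (x n)) (y - u (x n))
  rw [add_sub_cancel, ← q_neg QY (y - u (x n)), neg_sub] at h1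
  refine h1.trans ?_
  gcongr
  exact hu _

lemma extRel_unique {QY : QuasiNormOn Y} {w : X →ₗ[ℝ] H} {u : X →ₗ[ℝ] Y}
    (hu : ∀ x, QY.q (u x) ≤ ‖w x‖) {h : H} {y y' : Y}
    (H1 : ExtRel QY w u h y) (H2 : ExtRel QY w u h y') : y = y' := by
  have h1 := extRel_bound hu (extRel_add H1 (extRel_smul (-1) H2))
  rw [neg_one_smul, neg_one_smul, add_neg_cancel, norm_zero, mul_zero] at h1
  have h2 := (QY.eq_zero_iff _).1 (le_antisymm h1 (QY.nonneg _))
  exact add_neg_eq_zero.1 h2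

lemma extRel_exists {QY : QuasiNormOn Y} (hY : CauchyComplete QY.q) {w : X →ₗ[ℝ] H}
    {u : X →ₗ[ℝ] Y} (hu : ∀ x, QY.q (u x) ≤ ‖w x‖) (hd : DenseRange w) (h : H) :
    ∃ y, ExtRel QY w u h y := by
  obtain ⟨z, hz, hlim⟩ := mem_closure_iff_seq_limit.1 (hd h)
  choose x hx using hz
  have hlim' : Filter.Tendsto (fun n => w (x n)) Filter.atTop (nhds h) := by
    simpa only [hx] using hlim
  have hc := hlim'.cauchySeq
  obtain ⟨y, hy⟩ := hY (fun n => u (x n)) (by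
    intro ε hε
    obtain ⟨N, hN⟩ := Metric.cauchySeq_iff.1 hc ε hε
    refine ⟨N, fun m hm n hn => ?_⟩
    have h1 := hN m hm n hn
    rw [dist_eq_norm, ← map_sub] at h1
    rw [← map_sub]
    exact (hu _).trans_lt h1)
  refine ⟨y, x, hlim', ?_⟩
  rw [Metric.tendsto_atTop]
  intro ε hε
  obtain ⟨N, hN⟩ := hy ε hε
  refine ⟨N, fun n hn => ?_⟩
  rw [Real.dist_eq, sub_zero, abs_of_nonneg (QY.nonneg _)]
  exact hN n hn

lemma extend {QY : QuasiNormOn Y} (hY : CauchyComplete QY.q) {w : X →ₗ[ℝ] H}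
    {u : X →ₗ[ℝ] Y} (hu : ∀ x, QY.q (u x) ≤ ‖w x‖) (hd : DenseRange w) :
    ∃ v : H →ₗ[ℝ] Y, (∀ h, QY.q (v h) ≤ QY.k * ‖h‖) ∧ ∀ x, v (w x) = u x := by
  choose v hv using extRel_exists hY hu hd
  refine ⟨{ toFun := v
            map_add' := fun h h' => extRel_unique hu (hv _) (extRel_add (hv _) (hv _))
            map_smul' := fun a h => extRel_unique hu (hv _) (extRel_smul a (hv _)) },
    fun h => extRel_bound hu (hv h), fun x => extRel_unique hu (hv _) ?_⟩
  refine ⟨fun _ => x, tendsto_const_nhds, ?_⟩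
  simp only [sub_self, q_zero]
  exact tendsto_const_nhds

lemma HilbBd.gamma {QX : QuasiNormOn X} {QY : QuasiNormOn Y} (hY : CauchyComplete QY.q)
    {u : X →ₗ[ℝ] Y} {c d : ℝ} (hc : 0 ≤ c) (h : HilbBd QX QY u c) (hd : QY.k * c ≤ d) :
    Gamma2Le QX.q QY.q u d := by
  obtain ⟨B, h1, h2, h3⟩ := h
  have hk := QY.one_le_k
  obtain ⟨ι, w, hw, hdense⟩ := exists_hilbert B h1 (fun x => (sq_nonneg _).trans (h2 x))
  obtain ⟨v, hv, hvw⟩ := extend hY (w := w) (u := u) (fun x => by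
    refine (sq_le_sq₀ (QY.nonneg _) (norm_nonneg _)).1 ?_
    rw [hw]
    exact h2 x) hdense
  refine ⟨ι, w, v, c, QY.k, hc, by linarith, fun x => ?_, hv, hvw, hd⟩
  refine (sq_le_sq₀ (norm_nonneg _) (mul_nonneg hc (QX.nonneg _))).1 ?_
  rw [hw, mul_pow]
  exact h3 x

lemma opQNorm_spec (QX : QuasiNormOn X) (QY : QuasiNormOn Y) {u : X →ₗ[ℝ] Y}
    (hu : IsBddOp QX.q QY.q u) :
    0 ≤ opQNorm QX.q QY.q u ∧ ∀ x, QY.q (u x) ≤ opQNorm QX.q QY.q u * QX.q x := by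
  have h0 : 0 ≤ opQNorm QX.q QY.q u := Real.sInf_nonneg fun M hM => hM.1
  refine ⟨h0, fun x => ?_⟩
  refine le_of_forall_pos_le_add fun δ hδ => ?_
  have hq := QX.nonneg x
  have hne : {M | 0 ≤ M ∧ OpBoundedBy QX.q QY.q u M}.Nonempty := hu
  obtain ⟨M, hM, hlt⟩ := exists_lt_of_csInf_lt hne
    (lt_add_of_pos_right _ (show 0 < δ / (QX.q x + 1) by positivity))
  refine (hM.2 x).trans ?_
  calc M * QX.q x ≤ (opQNorm QX.q QY.q u + δ / (QX.q x + 1)) * QX.q x := by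
        gcongr
        exact hlt.le
    _ = opQNorm QX.q QY.q u * QX.q x + δ / (QX.q x + 1) * QX.q x := by ring
    _ ≤ _ := by
        gcongr
        rw [div_mul_eq_mul_div, div_le_iff₀ (by positivity)]
        nlinarith

end Factor
end AGT

/-- **Abstract Grothendieck theorem for quasi-Banach spaces** (Theorem 6).
If `X, Y` are quasi-Banach spaces such that `X*` and `Y` have cotype 2, then there is a
constant `C` such that every strongly approximable bounded operator `u : X → Y` satisfies
`γ₂(u) ≤ C ‖u‖`; in particular `u` factors through a Hilbert space. -/
theorem abstract_grothendieck_quasiBanach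
    {X : Type uX} {Y : Type uY} [AddCommGroup X] [Module ℝ X] [AddCommGroup Y] [Module ℝ Y]
    (QX : QuasiNormOn X) (QY : QuasiNormOn Y)
    (hXcomplete : CauchyComplete QX.q) (hYcomplete : CauchyComplete QY.q)
    (hdual : DualHasCotype2 QX.q) (hcotY : HasCotype QY.q 2) :
    ∃ C > (0:ℝ), ∀ u : X →ₗ[ℝ] Y, IsBddOp QX.q QY.q u →
      StronglyApproximable QX.q QY.q u →
      ∀ ε > (0:ℝ), Gamma2Le QX.q QY.q u (C * opQNorm QX.q QY.q u + ε) := by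
  obtain ⟨K, hK, hap⟩ := AGT.apriori QX QY hdual hcotY
  have hk := QY.one_le_k
  have hk0 : 0 < QY.k := by linarith
  refine ⟨QY.k * K + 1, by positivity, fun u hu hsa ε hε => ?_⟩
  obtain ⟨c, hc⟩ := AGT.hilbBd_of_strong hK hap hsa
  obtain ⟨hU0, hU⟩ := AGT.opQNorm_spec QX QY hu
  have h1 := hap u _ c hU0 hU hc (ε / QY.k) (by positivity)
  refine h1.gamma hYcomplete (by positivity) ?_
  rw [mul_add, mul_div_cancel₀ _ hk0.ne']
  nlinarith
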